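/- arXiv:1104.3617 — 4 statements merged into one kernel-verified Lean document; each statement's English description precedes it below -/
import Mathlib

section
/- If the function Φ is bounded on (0, ∞), then either every nontrivial zero ρ of the Riemann zeta function satisfies Re ρ = 1/2 (the Riemann hypothesis), or the set of nontrivial zeros ρ with Re ρ > 1/2 is infinite. -/
open Complex Filter Topology MeasureTheory Set

noncomputable def primePhi (x : ℝ) : ℝ :=
  ∑' p : Nat.Primes, Real.log (p : ℕ) * Real.exp (-((p : ℕ) : ℝ) ^ 2 * Real.pi * x)

noncomputable def bigPhi (x : ℝ) : ℝ :=
  (2 * Real.sqrt x * primePhi x - 1) / x ^ ((1 : ℝ) / 4)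

noncomputable def gam (z : ℂ) : ℂ := Complex.Gamma (z / 2) / (Real.pi : ℂ) ^ (z / 2)

def NontrivialZero (ρ : ℂ) : Prop := riemannZeta ρ = 0 ∧ 0 < ρ.re ∧ ρ.re < 1

noncomputable def Zfun (l : ℝ) : ℂ :=
  ∑' ρ : {ρ : ℂ // NontrivialZero ρ}, gam ρ * Complex.exp (-(l : ℂ) * ((ρ : ℂ) - 1 / 2))



noncomputable def pa (n : ℕ) : ℝ := if n.Prime then Real.log n else 0
noncomputable def pb (n : ℕ) : ℝ := if n.Prime then 0 else ArithmeticFunction.vonMangoldt n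

lemma pa_nonneg (n : ℕ) : 0 ≤ pa n := by
  unfold pa; split_ifs
  · exact Real.log_natCast_nonneg n
  · exact le_rfl

lemma pa_le (n : ℕ) : pa n ≤ n := by
  unfold pa; split_ifs
  · exact Real.log_le_self (Nat.cast_nonneg n)
  · positivity

lemma pa_add_pb (n : ℕ) : pa n + pb n = ArithmeticFunction.vonMangoldt n := by
  unfold pa pb; split_ifs with h
  · rw [ArithmeticFunction.vonMangoldt_apply_prime h, add_zero]
  · simp

lemma pa_le' (n : ℕ) : pa n ≤ ArithmeticFunction.vonMangoldt n := by
  rw [← pa_add_pb]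
  unfold pb; split_ifs
  · simp
  · linarith [ArithmeticFunction.vonMangoldt_nonneg (n := n)]

lemma pa_summable {x : ℝ} (hx : 0 < x) :
    Summable (fun n : ℕ => pa n * Real.exp (-Real.pi * (n : ℝ) ^ 2 * x)) := by
  have h := Real.summable_pow_mul_exp_neg_nat_mul 1 (r := Real.pi * x) (by positivity)
  refine Summable.of_nonneg_of_le (fun n => mul_nonneg (pa_nonneg n) (Real.exp_pos _).le) ?_ h
  intro n
  rw [pow_one]
  refine mul_le_mul (pa_le n) (Real.exp_le_exp.2 ?_) (Real.exp_pos _).le (Nat.cast_nonneg n)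
  · have : (n : ℝ) ≤ (n : ℝ) ^ 2 := by exact_mod_cast Nat.le_self_pow (by norm_num) n
    nlinarith [mul_pos Real.pi_pos hx]

lemma primePhi_eq (x : ℝ) :
    primePhi x = ∑' n : ℕ, pa n * Real.exp (-Real.pi * (n : ℝ) ^ 2 * x) := by
  unfold primePhi
  have := tsum_subtype {p : ℕ | p.Prime}
    (fun n : ℕ => Real.log n * Real.exp (-(n : ℝ) ^ 2 * Real.pi * x))
  refine Eq.trans this ?_
  congr 1
  ext n
  unfold pa
  by_cases h : n.Prime
  · simp only [Set.indicator, Set.mem_setOf_eq, h, if_true]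
    congr 2; ring
  · simp [Set.indicator, h]

lemma primePhi_hasSum {x : ℝ} (hx : 0 < x) :
    HasSum (fun n : ℕ => pa n * Real.exp (-Real.pi * (n : ℝ) ^ 2 * x)) (primePhi x) := by
  rw [primePhi_eq]; exact (pa_summable hx).hasSum

lemma primePhi_nonneg (x : ℝ) : 0 ≤ primePhi x := by
  rw [primePhi_eq]
  exact tsum_nonneg fun n => mul_nonneg (pa_nonneg n) (Real.exp_pos _).le

lemma primePhi_anti : AntitoneOn primePhi (Ioi 0) := by
  intro x hx y hy hxy
  refine hasSum_le ?_ (primePhi_hasSum hy) (primePhi_hasSum hx)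
  intro n
  refine mul_le_mul_of_nonneg_left (Real.exp_le_exp.2 ?_) (pa_nonneg n)
  nlinarith [mul_nonneg Real.pi_pos.le (sq_nonneg (n : ℝ))]

lemma primePhi_exp {x : ℝ} (hx : 1 ≤ x) :
    primePhi x ≤ primePhi 1 * Real.exp 1 * Real.exp (-1 * x) := by
  have h0 : (0 : ℝ) < x := by linarith
  have h1 := (primePhi_hasSum one_pos).mul_right (Real.exp 1 * Real.exp (-1 * x))
  rw [mul_assoc]
  refine hasSum_le ?_ (primePhi_hasSum h0) h1
  intro n
  rw [mul_assoc (pa n), ← Real.exp_add, ← Real.exp_add]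
  rcases Nat.eq_zero_or_pos n with rfl | hn
  · simp [pa]
  refine mul_le_mul_of_nonneg_left (Real.exp_le_exp.2 ?_) (pa_nonneg n)
  have h2 : (1 : ℝ) ≤ (n : ℝ) ^ 2 := by exact_mod_cast Nat.one_le_pow _ _ hn
  have h3 : 1 ≤ Real.pi * (n : ℝ) ^ 2 := by nlinarith [Real.pi_gt_three]
  nlinarith

noncomputable def ff (x : ℝ) : ℂ :=
  (primePhi x : ℂ) - (1 / 2 : ℂ) * indicator (Ioc 0 1) (fun t : ℝ => (t : ℂ) ^ (-(1 / 2) : ℂ)) x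

lemma phi_locInt : LocallyIntegrableOn (fun x => (primePhi x : ℂ)) (Ioi 0) := by
  rw [locallyIntegrableOn_iff isOpen_Ioi.isLocallyClosed]
  intro k hk hc
  exact ((primePhi_anti.mono hk).integrableOn_isCompact hc).ofReal

lemma ind_locInt : LocallyIntegrableOn
    (fun x => (1 / 2 : ℂ) * indicator (Ioc 0 1) (fun t : ℝ => (t : ℂ) ^ (-(1 / 2) : ℂ)) x)
    (Ioi 0) := by
  rw [locallyIntegrableOn_iff isOpen_Ioi.isLocallyClosed]
  intro k hk hc
  refine Integrable.const_mul ?_ _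
  refine Integrable.indicator ?_ measurableSet_Ioc
  refine ContinuousOn.integrableOn_compact hc ?_
  intro t ht
  refine ContinuousAt.continuousWithinAt ?_
  exact continuousAt_ofReal_cpow_const _ _ (Or.inr (ne_of_gt (hk ht)))

lemma ff_locInt : LocallyIntegrableOn ff (Ioi 0) := phi_locInt.sub ind_locInt

lemma ff_top : ff =O[atTop] fun t => Real.exp (-1 * t) := by
  refine Asymptotics.IsBigO.of_bound (primePhi 1 * Real.exp 1) ?_
  filter_upwards [eventually_gt_atTop 1] with x hx
  have : ff x = primePhi x := by
    unfold ff
    rw [indicator_of_notMem (fun h => absurd h.2 (not_le.2 hx))]; simp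
  rw [this, Complex.norm_real, Real.norm_of_nonneg (primePhi_nonneg x),
    Real.norm_of_nonneg (Real.exp_pos _).le]
  exact primePhi_exp hx.le

lemma ff_bot (hbdd : ∃ C : ℝ, ∀ x : ℝ, 0 < x → |bigPhi x| ≤ C) :
    ff =O[𝓝[>] 0] (fun x : ℝ => x ^ (-(1 / 4) : ℝ)) := by
  obtain ⟨C, hC⟩ := hbdd
  refine Asymptotics.IsBigO.of_bound (C / 2) ?_
  filter_upwards [Ioo_mem_nhdsGT (one_pos : (0 : ℝ) < 1)] with x hx
  have hx0 : 0 < x := hx.1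
  have h4 : 0 < x ^ (1 / 4 : ℝ) := Real.rpow_pos_of_pos hx0 _
  have hs : Real.sqrt x = x ^ (1 / 4 : ℝ) * x ^ (1 / 4 : ℝ) := by
    rw [← Real.rpow_add hx0, Real.sqrt_eq_rpow]; norm_num
  have h1 : ff x = ((primePhi x - 1 / 2 * (Real.sqrt x)⁻¹ : ℝ) : ℂ) := by
    unfold ff
    rw [indicator_of_mem (show x ∈ Ioc (0 : ℝ) 1 from ⟨hx.1, hx.2.le⟩), Real.sqrt_eq_rpow, ← Real.rpow_neg hx0.le]
    push_cast
    rw [Complex.ofReal_cpow hx0.le]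
    push_cast; rfl
  have h2 : primePhi x - 1 / 2 * (Real.sqrt x)⁻¹ = bigPhi x / 2 * x ^ (-(1 / 4) : ℝ) := by
    unfold bigPhi
    rw [Real.rpow_neg hx0.le, hs]
    field_simp
  rw [h1, Complex.norm_real, h2, norm_mul]
  refine mul_le_mul_of_nonneg_right ?_ (norm_nonneg _)
  rw [Real.norm_eq_abs, abs_div, abs_two]
  linarith [hC x hx0]

lemma mellin_ff (hbdd : ∃ C : ℝ, ∀ x : ℝ, 0 < x → |bigPhi x| ≤ C) {s : ℂ} (hs : 1 < s.re) :
    mellin ff (s / 2) = Gammaℝ s * LSeries (fun n => (pa n : ℂ)) s - 1 / (s - 1) := by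
  have hs2 : (s / 2).re = s.re / 2 := by simp
  have hc : MellinConvergent ff (s / 2) :=
    mellinConvergent_of_isBigO_rpow_exp one_pos ff_locInt ff_top (ff_bot hbdd) (by linarith)
  have hi := hasMellin_cpow_Ioc (-(1 / 2) : ℂ) (s := s / 2) (by rw [hs2]; norm_num; linarith)
  have hi2 := hasMellin_const_smul hi.1 (1 / 2 : ℂ)
  have hphi := hasMellin_add hc hi2.1
  have he : (fun t => ff t + (1 / 2 : ℂ) •
      indicator (Ioc 0 1) (fun t : ℝ => (t : ℂ) ^ (-(1 / 2) : ℂ)) t)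
      = fun t => (primePhi t : ℂ) := by
    ext t; simp [ff]
  rw [he, hi2.2, hi.2] at hphi
  have hsum : Summable fun n : ℕ => ‖(pa n : ℂ)‖ / |(n : ℝ)| ^ s.re := by
    have := (ArithmeticFunction.LSeriesSummable_vonMangoldt hs).norm
    refine Summable.of_nonneg_of_le (fun n => by positivity) ?_ this
    intro n
    rw [LSeries.norm_term_eq]
    split_ifs with h
    · subst h; simp [pa]
    · rw [Nat.abs_cast]
      gcongr
      rw [Complex.norm_real, Complex.norm_real, Real.norm_of_nonneg (pa_nonneg n),
        Real.norm_of_nonneg ArithmeticFunction.vonMangoldt_nonneg]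
      exact pa_le' n
  have hm := hasSum_mellin_pi_mul_sq (a := fun n : ℕ => (pa n : ℂ)) (r := fun n : ℕ => (n : ℝ))
    (F := fun t => (primePhi t : ℂ)) (s := s) (by linarith) (by
      intro t ht
      have := Complex.hasSum_ofReal.2 (primePhi_hasSum ht)
      convert this using 1
      ext n
      split_ifs with h
      · have : n = 0 := by exact_mod_cast h
        subst this; simp [pa]
      · push_cast; rfl) hsum
  have hL : ∑' n : ℕ, Gammaℝ s * (pa n : ℂ) / ((|(n : ℝ)| : ℝ) : ℂ) ^ s
      = Gammaℝ s * LSeries (fun n => (pa n : ℂ)) s := by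
    rw [LSeries, ← tsum_mul_left]
    congr 1; ext n
    rw [LSeries.term_def]
    split_ifs with h
    · subst h; simp [pa]
    · simp [mul_div_assoc]
  rw [hm.tsum_eq] at hL
  rw [← hL, hphi.2, smul_eq_mul]
  have : s - 1 ≠ 0 := by
    intro h
    rw [sub_eq_zero] at h; subst h; simp at hs
  have h2 : s / 2 + -(1 / 2) = (s - 1) / 2 := by ring
  rw [h2]
  field_simp
  ring

lemma pb_nonneg (n : ℕ) : 0 ≤ pb n := by
  unfold pb; split_ifs
  · exact le_rfl
  · exact ArithmeticFunction.vonMangoldt_nonneg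

lemma pb_summable {y : ℝ} (hy : 1 / 2 < y) : Summable fun n : ℕ => pb n / (n : ℝ) ^ y := by
  have hinj : Function.Injective (fun pk : Nat.Primes × ℕ => (pk.1 : ℕ) ^ (pk.2 + 2)) := by
    rintro ⟨p, k⟩ ⟨q, l⟩ h
    have : Nat.Primes.prodNatEquiv (p, k + 1) = Nat.Primes.prodNatEquiv (q, l + 1) := by
      rw [Nat.Primes.prodNatEquiv_apply, Nat.Primes.prodNatEquiv_apply]
      exact Subtype.ext h
    have := Nat.Primes.prodNatEquiv.injective this
    simpa using this
  rw [← hinj.summable_iff]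
  · have hs1 : Summable fun p : Nat.Primes => Real.log (p : ℕ) * ((p : ℕ) : ℝ) ^ (-(2 * y)) := by
      have h1 := ArithmeticFunction.LSeriesSummable_vonMangoldt (s := ((2 * y : ℝ) : ℂ))
        (by rw [Complex.ofReal_re]; linarith)
      have h2 := h1.norm.comp_injective (Subtype.val_injective (p := Nat.Prime))
      refine h2.congr ?_
      intro p
      have hp : Nat.Prime (p : ℕ) := p.2
      simp only [Function.comp]
      rw [LSeries.norm_term_eq, if_neg hp.ne_zero, ArithmeticFunction.vonMangoldt_apply_prime hp,
        Complex.norm_real, Real.norm_of_nonneg (Real.log_natCast_nonneg _), Complex.ofReal_re,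
        Real.rpow_neg (Nat.cast_nonneg _), div_eq_mul_inv]
    have hlt : (2 : ℝ) ^ (-y) < 1 := Real.rpow_lt_one_of_one_lt_of_neg (by norm_num) (by linarith)
    have hs2 := summable_geometric_of_lt_one (by positivity) hlt
    have := hs1.mul_of_nonneg hs2
      (fun p => mul_nonneg (Real.log_natCast_nonneg _) (by positivity)) (fun k => by positivity)
    refine Summable.of_nonneg_of_le (fun pk => div_nonneg (pb_nonneg _) (by positivity)) ?_ this
    rintro ⟨p, k⟩
    have hp : Nat.Prime (p : ℕ) := p.2
    have hp0 : (0 : ℝ) < ((p : ℕ) : ℝ) := by exact_mod_cast hp.pos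
    have hp2 : (2 : ℝ) ≤ ((p : ℕ) : ℝ) := by exact_mod_cast hp.two_le
    simp only [Function.comp]
    have e1 : pb ((p : ℕ) ^ (k + 2)) = Real.log (p : ℕ) := by
      unfold pb
      rw [if_neg (Nat.Prime.not_prime_pow (by omega)),
        ArithmeticFunction.vonMangoldt_apply_pow (by omega),
        ArithmeticFunction.vonMangoldt_apply_prime hp]
    rw [e1, div_eq_mul_inv, ← Real.rpow_neg (by positivity), mul_assoc]
    refine mul_le_mul_of_nonneg_left ?_ (Real.log_natCast_nonneg _)
    have e2 : (((p : ℕ) ^ (k + 2) : ℕ) : ℝ) ^ (-y)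
        = ((p : ℕ) : ℝ) ^ (-(2 * y)) * (((p : ℕ) : ℝ) ^ (-y)) ^ k := by
      push_cast
      rw [← Real.rpow_natCast, ← Real.rpow_natCast, ← Real.rpow_mul hp0.le, ← Real.rpow_mul hp0.le,
        ← Real.rpow_add hp0]
      congr 1; push_cast; ring
    rw [e2]
    refine mul_le_mul_of_nonneg_left ?_ (by positivity)
    refine pow_le_pow_left₀ (by positivity) ?_ k
    exact Real.rpow_le_rpow_of_nonpos (by norm_num) hp2 (by linarith)
  · intro n hn
    have : pb n = 0 := by
      unfold pb
      split_ifs with h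
      · rfl
      · rw [ArithmeticFunction.vonMangoldt_eq_zero_iff]
        intro hpp
        obtain ⟨p, k, hp, hk, rfl⟩ := hpp
        have hp' := Nat.prime_iff.2 hp
        have hk1 : k ≠ 1 := by rintro rfl; simp [hp'] at h
        exact hn ⟨(⟨p, hp'⟩, k - 2), by
          show p ^ (k - 2 + 2) = p ^ k
          congr 1; omega⟩
    rw [this, zero_div]

lemma pb_abs : LSeries.abscissaOfAbsConv (fun n => (pb n : ℂ)) ≤ ((1 / 2 : ℝ) : EReal) := by
  refine LSeries.abscissaOfAbsConv_le_of_forall_lt_LSeriesSummable fun y hy ↦ ?_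
  refine Summable.of_norm ?_
  refine Summable.of_nonneg_of_le (fun n => norm_nonneg _) ?_ (pb_summable hy)
  intro n
  rw [LSeries.norm_term_eq]
  split_ifs with h
  · exact div_nonneg (pb_nonneg _) (by positivity)
  · rw [Complex.norm_real, Real.norm_of_nonneg (pb_nonneg n), Complex.ofReal_re]

lemma pb_diff : DifferentiableOn ℂ (LSeries (fun n => (pb n : ℂ))) {s | 1 / 2 < s.re} := by
  refine (LSeries_differentiableOn _).mono ?_
  intro s hs
  refine lt_of_le_of_lt pb_abs ?_
  exact EReal.coe_lt_coe_iff.2 hs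

lemma U_conn : IsPreconnected ({s : ℂ | 1 / 2 < s.re} \ {1}) := by
  have hre (c : ℝ) : Convex ℝ {s : ℂ | c < s.re} := convex_halfSpace_re_gt c
  have A : IsPreconnected ({s : ℂ | 1 < s.re}) := (hre 1).isPreconnected
  have B : IsPreconnected ({s : ℂ | 1 / 2 < s.re} ∩ {s : ℂ | 0 < s.im}) :=
    ((hre _).inter (convex_halfSpace_im_gt 0)).isPreconnected
  have C : IsPreconnected ({s : ℂ | 1 / 2 < s.re} ∩ {s : ℂ | s.im < 0}) :=
    ((hre _).inter (convex_halfSpace_im_lt 0)).isPreconnected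
  have D : IsPreconnected ({s : ℂ | 1 / 2 < s.re} ∩ {s : ℂ | s.re < 1}) :=
    ((hre _).inter (convex_halfSpace_re_lt 1)).isPreconnected
  have AB := A.union (⟨2, 1⟩ : ℂ) (by simp) (by simp; norm_num) B
  have ABC := AB.union (⟨2, -1⟩ : ℂ) (by simp) (by simp; norm_num) C
  have ABCD := ABC.union (⟨3 / 4, 1⟩ : ℂ) (by left; right; constructor <;> norm_num)
    (by constructor <;> norm_num) D
  convert ABCD using 1
  ext s
  simp only [mem_diff, mem_setOf_eq, mem_singleton_iff, mem_union, mem_inter_iff]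
  constructor
  · rintro ⟨h1, h2⟩
    rcases lt_trichotomy s.re 1 with h | h | h
    · right; exact ⟨h1, h⟩
    · rcases lt_trichotomy s.im 0 with h' | h' | h'
      · left; right; exact ⟨h1, h'⟩
      · exact absurd (Complex.ext (by simpa using h) (by simpa using h')) h2
      · left; left; right; exact ⟨h1, h'⟩
    · left; left; left; exact h
  · rintro (((h | h) | h) | h)
    · exact ⟨by linarith, by rintro rfl; simp at h⟩
    · exact ⟨h.1, by rintro rfl; simp at h⟩
    · exact ⟨h.1, by rintro rfl; simp at h⟩
    · exact ⟨h.1, by rintro rfl; simp at h⟩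

lemma zeta_ne_zero_half (hbdd : ∃ C : ℝ, ∀ x : ℝ, 0 < x → |bigPhi x| ≤ C) {ρ : ℂ}
    (h1 : 1 / 2 < ρ.re) (h2 : ρ ≠ 1) : riemannZeta ρ ≠ 0 := by
  intro h0
  set U : Set ℂ := {s : ℂ | 1 / 2 < s.re} \ {1} with hU
  have hUo : IsOpen U := (isOpen_lt continuous_const Complex.continuous_re).sdiff isClosed_singleton
  let K : ℂ → ℂ := fun s => -((mellin ff (s / 2) + 1 / (s - 1)) * (Gammaℝ s)⁻¹
    + LSeries (fun n => (pb n : ℂ)) s)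
  have hK : DifferentiableOn ℂ K U := by
    intro s hs
    have hs1 : (1 / 2 : ℝ) < s.re := hs.1
    have hs2 : s - 1 ≠ 0 := sub_ne_zero.2 hs.2
    have d1 : DifferentiableAt ℂ (fun s : ℂ => mellin ff (s / 2)) s := by
      have := mellin_differentiableAt_of_isBigO_rpow_exp (s := s / 2) one_pos ff_locInt ff_top
        (ff_bot hbdd) (by
          have : (s / 2).re = s.re / 2 := by simp
          linarith)
      have hd : DifferentiableAt ℂ (fun s : ℂ => s / 2) s := differentiableAt_id.div_const 2
      exact DifferentiableAt.comp (g := mellin ff) (f := fun s : ℂ => s / 2) s this hd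
    have d2 : DifferentiableAt ℂ (fun s : ℂ => 1 / (s - 1)) s :=
      (differentiableAt_const _).div (differentiableAt_id.sub_const 1) hs2
    have d3 : DifferentiableAt ℂ (LSeries (fun n => (pb n : ℂ))) s :=
      pb_diff.differentiableAt
        ((isOpen_lt continuous_const Complex.continuous_re).mem_nhds hs.1)
    exact (((d1.add d2).mul (Complex.differentiable_Gammaℝ_inv s)).add d3).neg.differentiableWithinAt
  have hZ : DifferentiableOn ℂ riemannZeta U := fun s hs =>
    (differentiableAt_riemannZeta hs.2).differentiableWithinAt
  have aK := hK.analyticOnNhd hUo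
  have aZ := hZ.analyticOnNhd hUo
  have h2U : (2 : ℂ) ∈ U := ⟨by simp; norm_num, by simp⟩
  have hρU : ρ ∈ U := ⟨h1, h2⟩
  have heq : EqOn (deriv riemannZeta) (riemannZeta * K) U := by
    refine AnalyticOnNhd.eqOn_of_preconnected_of_eventuallyEq aZ.deriv (aZ.mul aK) U_conn h2U ?_
    have : {s : ℂ | 1 < s.re} ∈ 𝓝 (2 : ℂ) :=
      (isOpen_lt continuous_const Complex.continuous_re).mem_nhds (by simp)
    filter_upwards [this] with s hs
    have hs : 1 < s.re := hs
    have hv := ArithmeticFunction.LSeriesSummable_vonMangoldt hs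
    have hpb : LSeriesSummable (fun n => (pb n : ℂ)) s := by
      refine LSeriesSummable_of_abscissaOfAbsConv_lt_re (lt_of_le_of_lt pb_abs ?_)
      exact EReal.coe_lt_coe_iff.2 (by linarith)
    have hfun : (fun n => (pa n : ℂ)) =
        (fun n => ((ArithmeticFunction.vonMangoldt n : ℝ) : ℂ)) - (fun n => (pb n : ℂ)) := by
      ext n
      simp [← pa_add_pb]
    have hpa : LSeries (fun n => (pa n : ℂ)) s
        = LSeries (fun n => ((ArithmeticFunction.vonMangoldt n : ℝ) : ℂ)) s
          - LSeries (fun n => (pb n : ℂ)) s := by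
      rw [hfun]
      exact LSeries_sub hv hpb
    have hz := riemannZeta_ne_zero_of_one_lt_re hs
    have hg : Gammaℝ s ≠ 0 := Complex.Gammaℝ_ne_zero_of_re_pos (by linarith)
    have hKs : K s = deriv riemannZeta s / riemannZeta s := by
      simp only [K]
      rw [mellin_ff hbdd hs, sub_add_cancel, mul_comm (Gammaℝ s), mul_assoc, mul_inv_cancel₀ hg,
        mul_one, hpa, sub_add_cancel,
        ArithmeticFunction.LSeries_vonMangoldt_eq_deriv_riemannZeta_div hs, neg_div, neg_neg]
    rw [Pi.mul_apply, hKs, mul_div_cancel₀ _ hz]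
  have hev : deriv riemannZeta =ᶠ[𝓝 ρ] riemannZeta * K :=
    heq.eventuallyEq_of_mem (hUo.mem_nhds hρU)
  have ho := (aZ ρ hρU).analyticOrderAt_deriv_add_one
  rw [h0, analyticOrderAt_congr hev, analyticOrderAt_mul (aZ ρ hρU) (aK ρ hρU)] at ho
  simp only [sub_zero] at ho
  have htop : analyticOrderAt riemannZeta ρ ≠ ⊤ := by
    intro h
    rw [analyticOrderAt_eq_top] at h
    have := aZ.eqOn_zero_of_preconnected_of_eventuallyEq_zero U_conn hρU h h2U
    exact riemannZeta_ne_zero_of_one_lt_re (by simp) this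
  have hle : analyticOrderAt riemannZeta ρ + 1 ≤ analyticOrderAt riemannZeta ρ := by
    conv_rhs => rw [← ho]
    gcongr
    exact le_self_add
  exact absurd hle (not_le.2 ((ENat.lt_add_one_iff htop).2 le_rfl))

/-- If Φ is bounded on (0,∞), then either every nontrivial zero of ζ has real part 1/2,
or there are infinitely many nontrivial zeros with real part > 1/2. -/
theorem stmt_1
    (hbdd : ∃ C : ℝ, ∀ x : ℝ, 0 < x → |bigPhi x| ≤ C) :
    (∀ ρ : ℂ, NontrivialZero ρ → ρ.re = 1 / 2) ∨
      {ρ : ℂ | NontrivialZero ρ ∧ 1 / 2 < ρ.re}.Infinite := by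
  left
  rintro ρ ⟨h0, hp, hl⟩
  have hne1 : ρ ≠ 1 := by rintro rfl; simp at hl
  rcases lt_trichotomy ρ.re (1 / 2) with h | h | h
  · exfalso
    have hz : riemannZeta (1 - ρ) = 0 := by
      rw [riemannZeta_one_sub _ hne1, h0, mul_zero]
      intro n hn
      rw [hn] at hp
      simp at hp
      linarith [(Nat.cast_nonneg n : (0 : ℝ) ≤ n)]
    refine zeta_ne_zero_half hbdd (ρ := 1 - ρ) ?_ ?_ hz
    · simp; linarith
    · intro h'
      have : ρ = 0 := by linear_combination -h'
      rw [this] at hp; simp at hp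
  · exact h
  · exact absurd h0 (zeta_ne_zero_half hbdd h hne1)
end

section
/- The limit, as real a tends to 1/2 from the right, of −ζ'(a)/ζ(a) − ∑_{m≥2} ∑_p (log p)·p^{−ma} + 1/(2a−1) exists and is finite; here for each a with 1/2 < a < 1 one has ζ(a) ≠ 0 and the double series over integers m ≥ 2 and primes p converges absolutely. -/
open Complex Filter Topology

noncomputable def etaT (k : ℕ) (s : ℂ) : ℂ :=
  1 / (2 * (k : ℂ) + 1) ^ s - 1 / (2 * (k : ℂ) + 2) ^ s

lemma etaT_bound (k : ℕ) (s : ℂ) (hs : 0 < s.re) :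
    ‖etaT k s‖ ≤ ‖s‖ * (2 * (k : ℝ) + 1) ^ (-(s.re + 1)) := by
  have hpos : (0 : ℝ) < 2 * (k : ℝ) + 1 := by positivity
  have key := norm_image_sub_le_of_norm_deriv_le_segment' (a := (2 * (k : ℝ) + 1))
    (b := 2 * (k : ℝ) + 2) (f := fun x : ℝ => (x : ℂ) ^ (-s))
    (f' := fun x : ℝ => (-s) * (x : ℂ) ^ (-s - 1))
    (C := ‖s‖ * (2 * (k : ℝ) + 1) ^ (-(s.re + 1))) ?_ ?_ (2 * (k : ℝ) + 2)
    ⟨by linarith, le_rfl⟩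
  · rw [norm_sub_rev] at key
    have : etaT k s = (((2 * (k : ℝ) + 1 : ℝ)) : ℂ) ^ (-s) - (((2 * (k : ℝ) + 2 : ℝ)) : ℂ) ^ (-s) := by
      simp [etaT, Complex.cpow_neg]
    rw [this]
    refine key.trans (le_of_eq ?_)
    ring
  · intro x hx
    have hx0 : 0 < x := lt_of_lt_of_le hpos hx.1
    by_cases h0 : s = 0
    · simp [h0] at hs
    exact (hasDerivAt_ofReal_cpow_const hx0.ne' (neg_ne_zero.mpr h0)).hasDerivWithinAt
  · intro x hx
    have hx0 : 0 < x := lt_of_lt_of_le hpos hx.1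
    rw [norm_mul, norm_neg, Complex.norm_cpow_eq_rpow_re_of_pos hx0]
    gcongr
    have : (-s - 1).re = -(s.re + 1) := by simp; ring
    rw [this]
    exact Real.rpow_le_rpow_of_nonpos hpos hx.1 (by linarith)

lemma etaT_summable_bd (ε : ℝ) (hε : 0 < ε) : Summable fun k : ℕ => (2 * (k : ℝ) + 1) ^ (-(ε + 1)) := by
  have h1 : Summable fun n : ℕ => (n : ℝ) ^ (-(ε + 1)) :=
    Real.summable_nat_rpow.mpr (by linarith)
  have h2 := h1.comp_injective (i := fun k : ℕ => 2 * k + 1) (by intro a b h; simpa using h)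
  refine h2.congr fun k => ?_
  simp

lemma eta_diff : DifferentiableOn ℂ (fun s => ∑' k, etaT k s) {s | 0 < s.re} := by
  intro s hs
  simp only [Set.mem_ofPred_eq] at hs
  have hU : IsOpen {z : ℂ | s.re / 2 < z.re ∧ ‖z‖ < ‖s‖ + 1} :=
    (isOpen_lt continuous_const continuous_re).inter (isOpen_lt continuous_norm continuous_const)
  have h := Complex.differentiableOn_tsum_of_summable_norm
    (F := etaT) (U := {z : ℂ | s.re / 2 < z.re ∧ ‖z‖ < ‖s‖ + 1})
    ((etaT_summable_bd (s.re / 2) (by linarith)).mul_left (‖s‖ + 1)) ?_ hU ?_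
  · exact (h.differentiableAt (hU.mem_nhds ⟨by linarith, by linarith⟩)).differentiableWithinAt
  · intro k
    apply Differentiable.differentiableOn
    intro z
    unfold etaT
    have h1 : (2 * (k : ℂ) + 1) ≠ 0 := by exact_mod_cast Nat.succ_ne_zero (2 * k)
    have h2 : (2 * (k : ℂ) + 2) ≠ 0 := by exact_mod_cast Nat.succ_ne_zero (2 * k + 1)
    have h1' : (2 * (k : ℂ) + 1) ^ z ≠ 0 := by simp [Complex.cpow_eq_zero_iff, h1]
    have h2' : (2 * (k : ℂ) + 2) ^ z ≠ 0 := by simp [Complex.cpow_eq_zero_iff, h2]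
    exact ((differentiableAt_const _).div (differentiableAt_id.const_cpow (.inl h1)) h1').sub
      ((differentiableAt_const _).div (differentiableAt_id.const_cpow (.inl h2)) h2')
  · intro k z hz
    refine (etaT_bound k z (by linarith [hz.1])).trans ?_
    gcongr
    · exact hz.2.le
    · linarith [(Nat.cast_nonneg k : (0 : ℝ) ≤ k)]
    · exact hz.1.le

lemma eta_eq_of_one_lt {s : ℂ} (hs : 1 < s.re) :
    ∑' k, etaT k s = (1 - 2 ^ (1 - s)) * riemannZeta s := by
  have hsum : Summable fun n : ℕ => 1 / ((n : ℂ) + 1) ^ s := by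
    have := (summable_nat_add_iff 1).mpr (Complex.summable_one_div_nat_cpow.mpr hs)
    simpa using this
  have he : Summable fun k : ℕ => 1 / (2 * (k : ℂ) + 1) ^ s := by
    have := hsum.comp_injective (i := fun k : ℕ => 2 * k) (by intro a b h; simpa using h)
    refine this.congr fun k => ?_
    simp
  have heq : ∀ k : ℕ, 1 / (2 * (k : ℂ) + 2) ^ s = 2 ^ (-s) * (1 / ((k : ℂ) + 1) ^ s) := by
    intro k
    have : (2 * (k : ℂ) + 2) = ((2 : ℝ) : ℂ) * (((k : ℝ) + 1 : ℝ) : ℂ) := by push_cast; ring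
    rw [this, Complex.mul_cpow_ofReal_nonneg (by norm_num) (by positivity)]
    push_cast
    rw [Complex.cpow_neg]
    field_simp
  have ho : Summable fun k : ℕ => 1 / (2 * (k : ℂ) + 2) ^ s := by
    simp_rw [heq]; exact hsum.mul_left _
  have hz := zeta_eq_tsum_one_div_nat_add_one_cpow hs
  have hoz : ∑' k : ℕ, 1 / (2 * (k : ℂ) + 2) ^ s = 2 ^ (-s) * riemannZeta s := by
    simp_rw [heq]; rw [tsum_mul_left, ← hz]
  have hsp := tsum_even_add_odd (f := fun n : ℕ => 1 / ((n : ℂ) + 1) ^ s)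
    (he.congr fun k => by simp) (ho.congr fun k => by push_cast; ring_nf)
  rw [← hz] at hsp
  have h1 : ∑' k : ℕ, 1 / (((2 * k : ℕ) : ℂ) + 1) ^ s = ∑' k : ℕ, 1 / (2 * (k : ℂ) + 1) ^ s :=
    tsum_congr fun k => by simp
  have h2 : ∑' k : ℕ, 1 / (((2 * k + 1 : ℕ) : ℂ) + 1) ^ s = ∑' k : ℕ, 1 / (2 * (k : ℂ) + 2) ^ s :=
    tsum_congr fun k => by push_cast; ring_nf
  rw [h1, h2, hoz] at hsp
  unfold etaT
  rw [he.tsum_sub ho, hoz]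
  have : (2 : ℂ) ^ (1 - s) = 2 * 2 ^ (-s) := by
    rw [sub_eq_add_neg, Complex.cpow_add _ _ two_ne_zero, Complex.cpow_one]
  rw [this]
  linear_combination hsp

lemma eta_ident {s : ℂ} (hs : 0 < s.re) :
    (s - 1) * ∑' k, etaT k s = (1 - 2 ^ (1 - s)) * riemannZeta₁ s := by
  have hO : IsOpen {s : ℂ | 0 < s.re} := isOpen_lt continuous_const continuous_re
  have hf : AnalyticOnNhd ℂ (fun s => (s - 1) * ∑' k, etaT k s) {s | 0 < s.re} :=
    (((differentiable_id.sub_const 1).differentiableOn).mul eta_diff).analyticOnNhd hO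
  have hg : AnalyticOnNhd ℂ (fun s => (1 - 2 ^ (1 - s)) * riemannZeta₁ s) {s | 0 < s.re} := by
    refine DifferentiableOn.analyticOnNhd (Differentiable.differentiableOn ?_) hO
    refine Differentiable.mul (fun z => ?_) differentiable_riemannZeta₁
    exact (differentiableAt_const _).sub
      (((differentiableAt_const _).sub differentiableAt_id).const_cpow (.inl two_ne_zero))
  refine hf.eqOn_of_preconnected_of_eventuallyEq hg
    (convex_halfSpace_re_gt 0).isPreconnected (z₀ := 2) (by simp) ?_ hs
  have : {s : ℂ | 1 < s.re} ∈ 𝓝 (2 : ℂ) :=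
    (isOpen_lt continuous_const continuous_re).mem_nhds (by simp)
  filter_upwards [this] with z hz
  have hz : 1 < z.re := hz
  have h1 : z ≠ 1 := by rintro rfl; simp at hz
  rw [eta_eq_of_one_lt hz, riemannZeta_eq_inv_sub_mul h1]
  have := sub_ne_zero_of_ne h1
  field_simp

lemma zeta_ne {a : ℝ} (h0 : 0 < a) (h1 : a < 1) : riemannZeta (a : ℂ) ≠ 0 := by
  intro hz
  have hne : (a : ℂ) ≠ 1 := by exact_mod_cast h1.ne
  have hsub := sub_ne_zero_of_ne hne
  rw [riemannZeta_eq_inv_sub_mul hne] at hz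
  have hz1 : riemannZeta₁ a = 0 := by
    rcases mul_eq_zero.mp hz with h | h
    · exact absurd h (inv_ne_zero hsub)
    · exact h
  have hid := eta_ident (s := (a : ℂ)) (by simpa using h0)
  rw [hz1, mul_zero] at hid
  have hD := (mul_eq_zero.mp hid).resolve_left hsub
  have hre : ∀ k : ℕ, etaT k a =
      (((2 * (k : ℝ) + 1) ^ (-a) - (2 * (k : ℝ) + 2) ^ (-a) : ℝ) : ℂ) := by
    intro k
    rw [etaT, Complex.ofReal_sub, Complex.ofReal_cpow (by positivity),
      Complex.ofReal_cpow (by positivity)]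
    simp [Complex.cpow_neg]
  have hpos : ∀ k : ℕ, 0 < (2 * (k : ℝ) + 1) ^ (-a) - (2 * (k : ℝ) + 2) ^ (-a) := by
    intro k
    exact sub_pos.mpr (Real.rpow_lt_rpow_of_neg (by positivity) (by linarith) (by linarith))
  have hsm : Summable fun k : ℕ => (2 * (k : ℝ) + 1) ^ (-a) - (2 * (k : ℝ) + 2) ^ (-a) := by
    refine Summable.of_nonneg_of_le (fun k => (hpos k).le) (fun k => ?_)
      ((etaT_summable_bd a h0).mul_left ‖(a : ℂ)‖)
    have := etaT_bound k a (by simpa using h0)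
    rw [hre, Complex.norm_real, Real.norm_of_nonneg (hpos k).le] at this
    simpa using this
  simp_rw [hre] at hD
  rw [← Complex.ofReal_tsum] at hD
  have hD' := Complex.ofReal_eq_zero.mp hD
  exact absurd hD' (hsm.tsum_pos (fun k => (hpos k).le) 0 (hpos 0)).ne'

noncomputable def gT (a : ℝ) (q : {m : ℕ // 2 ≤ m} × Nat.Primes) : ℝ :=
  Real.log ((q.2 : ℕ) : ℝ) * ((q.2 : ℕ) : ℝ) ^ (-((q.1 : ℕ) : ℝ) * a)

def idxMap : (Nat.Primes × ℕ) ⊕ (Nat.Primes × ℕ) → {m : ℕ // 2 ≤ m} × Nat.Primes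
  | .inl x => (⟨2 * x.2 + 2, by omega⟩, x.1)
  | .inr x => (⟨2 * x.2 + 3, by omega⟩, x.1)

lemma idxMap_bij : Function.Bijective idxMap := by
  constructor
  · rintro (⟨p, k⟩ | ⟨p, k⟩) (⟨p', k'⟩ | ⟨p', k'⟩) h <;>
      simp only [idxMap, Prod.mk.injEq, Subtype.mk.injEq] at h
    · obtain ⟨h1, rfl⟩ := h
      have : k = k' := by omega
      rw [this]
    · omega
    · omega
    · obtain ⟨h1, rfl⟩ := h
      have : k = k' := by omega
      rw [this]
  · rintro ⟨⟨m, hm⟩, p⟩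
    rcases Nat.even_or_odd' m with ⟨c, rfl | rfl⟩
    · refine ⟨.inl (p, c - 1), ?_⟩
      simp only [idxMap, Prod.mk.injEq, Subtype.mk.injEq, and_true]
      omega
    · refine ⟨.inr (p, c - 1), ?_⟩
      simp only [idxMap, Prod.mk.injEq, Subtype.mk.injEq, and_true]
      omega

noncomputable def oddT (x : Nat.Primes × ℕ) (a : ℝ) : ℝ :=
  Real.log ((x.1 : ℕ) : ℝ) * ((x.1 : ℕ) : ℝ) ^ (-(2 * (x.2 : ℝ) + 3) * a)

noncomputable def oddU (x : Nat.Primes × ℕ) : ℝ :=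
  (4 * ((x.1 : ℕ) : ℝ) ^ (-(5 / 4) : ℝ)) * (1 / 2) ^ x.2

lemma oddU_summable : Summable oddU := by
  have h1 : Summable fun p : Nat.Primes => 4 * ((p : ℕ) : ℝ) ^ (-(5 / 4) : ℝ) :=
    (Nat.Primes.summable_rpow.mpr (by norm_num)).mul_left 4
  exact h1.mul_of_nonneg summable_geometric_two (fun p => by positivity) (fun k => by positivity)

lemma oddT_nonneg (x : Nat.Primes × ℕ) (a : ℝ) : 0 ≤ oddT x a := by
  unfold oddT
  have : 0 ≤ Real.log ((x.1 : ℕ) : ℝ) := Real.log_natCast_nonneg _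
  positivity

lemma oddT_le (x : Nat.Primes × ℕ) (a : ℝ) (ha : 1 / 2 ≤ a) : ‖oddT x a‖ ≤ oddU x := by
  rw [Real.norm_of_nonneg (oddT_nonneg x a)]
  obtain ⟨p, k⟩ := x
  have hp2 : (2 : ℝ) ≤ ((p : ℕ) : ℝ) := by exact_mod_cast p.2.two_le
  have hp0 : (0 : ℝ) < ((p : ℕ) : ℝ) := by linarith
  have hlog : Real.log ((p : ℕ) : ℝ) ≤ 4 * ((p : ℕ) : ℝ) ^ (1 / 4 : ℝ) := by
    have := Real.log_le_rpow_div hp0.le (show (0 : ℝ) < 1 / 4 by norm_num)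
    linarith
  have hpow : ((p : ℕ) : ℝ) ^ (-(2 * (k : ℝ) + 3) * a) ≤
      ((p : ℕ) : ℝ) ^ (-(3 / 2) : ℝ) * (1 / 2) ^ k := by
    calc ((p : ℕ) : ℝ) ^ (-(2 * (k : ℝ) + 3) * a)
        ≤ ((p : ℕ) : ℝ) ^ (-(3 / 2) + -(k : ℝ)) := by
          apply Real.rpow_le_rpow_of_exponent_le (by linarith)
          nlinarith [(Nat.cast_nonneg k : (0 : ℝ) ≤ k)]
      _ = ((p : ℕ) : ℝ) ^ (-(3 / 2) : ℝ) * (1 / ((p : ℕ) : ℝ)) ^ k := by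
          rw [Real.rpow_add hp0, Real.rpow_neg hp0.le (k : ℝ), Real.rpow_natCast]
          simp
      _ ≤ _ := by gcongr
  unfold oddT oddU
  dsimp only
  calc _ ≤ (4 * ((p : ℕ) : ℝ) ^ (1 / 4 : ℝ)) * (((p : ℕ) : ℝ) ^ (-(3 / 2) : ℝ) * (1 / 2) ^ k) := by
        gcongr
    _ = 4 * (((p : ℕ) : ℝ) ^ (1 / 4 : ℝ) * ((p : ℕ) : ℝ) ^ (-(3 / 2) : ℝ)) * (1 / 2) ^ k := by ring
    _ = _ := by
        rw [← Real.rpow_add hp0]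
        norm_num

lemma odd_cont : ContinuousOn (fun a => ∑' x, oddT x a) (Set.Ici (1 / 2)) := by
  refine continuousOn_tsum (fun x => ?_) oddU_summable fun x a ha => oddT_le x a ha
  refine Continuous.continuousOn ?_
  unfold oddT
  have : ((x.1 : ℕ) : ℝ) ≠ 0 := by exact_mod_cast x.1.2.ne_zero
  exact continuous_const.mul (Continuous.rpow continuous_const (by fun_prop) fun _ => .inl this)

noncomputable def evT (a : ℝ) (x : Nat.Primes × ℕ) : ℝ :=
  Real.log ((x.1 : ℕ) : ℝ) * ((x.1 : ℕ) : ℝ) ^ (-(2 * (x.2 : ℝ) + 2) * a)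

open ArithmeticFunction in
lemma ev_sum (a : ℝ) (ha : 1 / 2 < a) : Summable (evT a) ∧
    ((∑' x, evT a x : ℝ) : ℂ) = -deriv riemannZeta (2 * a : ℂ) / riemannZeta (2 * a : ℂ) := by
  have hre : 1 < (2 * a : ℂ).re := by simp; linarith
  have hs := LSeriesSummable_vonMangoldt hre
  have hv := LSeries_vonMangoldt_eq_deriv_riemannZeta_div hre
  have hH := hs.LSeriesHasSum
  rw [hv] at hH
  unfold LSeriesHasSum at hH
  set f : ℕ → ℝ := fun n => Λ n * (n : ℝ) ^ (-(2 * a)) with hf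
  have hterm : LSeries.term (fun n => ((Λ n : ℝ) : ℂ)) (2 * a : ℂ) = fun n => ((f n : ℝ) : ℂ) := by
    ext n
    rcases eq_or_ne n 0 with rfl | hn
    · simp [hf]
    · rw [LSeries.term_of_ne_zero hn, hf]
      simp only [Complex.ofReal_mul]
      rw [Complex.ofReal_cpow (by positivity)]
      push_cast
      rw [Complex.cpow_neg, div_eq_mul_inv]
  rw [hterm] at hH
  have hfs : Summable f := by
    have := hH.summable
    exact_mod_cast this
  have hsupp : Function.support f ⊆ {n | IsPrimePow n} := by
    intro n hn
    by_contra hc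
    apply hn
    simp [hf, vonMangoldt_eq_zero_iff.mpr hc]
  have hfh : HasSum (f ∘ ((↑) : {n : ℕ // IsPrimePow n} → ℕ)) (∑' n, f n) :=
    (hasSum_subtype_iff_of_support_subset hsupp).mpr hfs.hasSum
  have hfe := (Nat.Primes.prodNatEquiv.hasSum_iff).mpr hfh
  have hev : (f ∘ ((↑) : {n : ℕ // IsPrimePow n} → ℕ)) ∘ Nat.Primes.prodNatEquiv = evT a := by
    ext ⟨p, k⟩
    simp only [Function.comp_apply, Nat.Primes.coe_prodNatEquiv_apply, hf, evT]
    rw [vonMangoldt_apply_pow (Nat.succ_ne_zero k), vonMangoldt_apply_prime p.2]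
    congr 1
    push_cast
    rw [← Real.rpow_natCast, ← Real.rpow_mul (by positivity)]
    congr 1
    push_cast
    ring
  rw [hev] at hfe
  refine ⟨hfe.summable, ?_⟩
  rw [hfe.tsum_eq, Complex.ofReal_tsum]
  exact hH.tsum_eq

lemma gT_hasSum (a : ℝ) (ha : 1 / 2 < a) :
    HasSum (gT a) (∑' x, evT a x + ∑' x, oddT x a) := by
  have h1 := (ev_sum a ha).1.hasSum
  have h2 : HasSum (fun x => oddT x a) (∑' x, oddT x a) :=
    (Summable.of_norm_bounded oddU_summable fun x => oddT_le x a ha.le).hasSum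
  rw [← (Equiv.ofBijective idxMap idxMap_bij).hasSum_iff]
  refine HasSum.sum ?_ ?_
  · refine h1.congr_fun fun x => ?_
    simp [gT, idxMap, evT]
  · refine h2.congr_fun fun x => ?_
    simp [gT, idxMap, oddT]

/-- The limit as a → (1/2)⁺ of −ζ'(a)/ζ(a) − ∑_{m≥2} ∑_p (log p)·p^{−ma} + 1/(2a−1)
exists and is finite; moreover for 1/2 < a < 1 one has ζ(a) ≠ 0 and the double series
converges absolutely. -/
theorem stmt_8 :
    (∀ a : ℝ, 1 / 2 < a → a < 1 →
      riemannZeta (a : ℂ) ≠ 0 ∧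
      Summable (fun q : {m : ℕ // 2 ≤ m} × Nat.Primes =>
        |Real.log ((q.2 : ℕ) : ℝ) * ((q.2 : ℕ) : ℝ) ^ (-((q.1 : ℕ) : ℝ) * a)|)) ∧
    ∃ L : ℂ,
      Tendsto (fun a : ℝ =>
          -deriv riemannZeta (a : ℂ) / riemannZeta (a : ℂ)
            - ((∑' q : {m : ℕ // 2 ≤ m} × Nat.Primes,
                Real.log ((q.2 : ℕ) : ℝ) * ((q.2 : ℕ) : ℝ) ^ (-((q.1 : ℕ) : ℝ) * a) : ℝ) : ℂ)
            + 1 / (2 * (a : ℂ) - 1))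
        (𝓝[>] (1 / 2 : ℝ)) (𝓝 L) := by
  refine ⟨fun a h0 h1 => ⟨zeta_ne (by linarith) h1, (gT_hasSum a h0).summable.abs⟩, ?_⟩
  have hne : ((1 / 2 : ℝ) : ℂ) ≠ 1 := by
    intro h
    have : (1 / 2 : ℝ) = 1 := by exact_mod_cast h
    norm_num at this
  have hA : Tendsto (fun a : ℝ => -deriv riemannZeta (a : ℂ) / riemannZeta (a : ℂ))
      (𝓝[>] (1 / 2 : ℝ)) (𝓝 (-deriv riemannZeta ((1 / 2 : ℝ) : ℂ) / riemannZeta ((1 / 2 : ℝ) : ℂ))) := by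
    have han : AnalyticAt ℂ riemannZeta ((1 / 2 : ℝ) : ℂ) :=
      (differentiableOn_riemannZeta.analyticOnNhd isOpen_compl_singleton) _ hne
    have hc : ContinuousAt (fun s => -deriv riemannZeta s / riemannZeta s) ((1 / 2 : ℝ) : ℂ) :=
      han.deriv.continuousAt.neg.div han.continuousAt (zeta_ne (by norm_num) (by norm_num))
    exact (hc.tendsto.comp (Complex.continuous_ofReal.tendsto _)).mono_left nhdsWithin_le_nhds
  have hO : Tendsto (fun a : ℝ => ((∑' x, oddT x a : ℝ) : ℂ)) (𝓝[>] (1 / 2 : ℝ))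
      (𝓝 ((∑' x, oddT x (1 / 2) : ℝ) : ℂ)) := by
    have := (odd_cont (1 / 2) Set.self_mem_Ici).tendsto.mono_left
      (nhdsWithin_mono _ Set.Ioi_subset_Ici_self)
    exact (Complex.continuous_ofReal.tendsto _).comp this
  have hZ : Tendsto (fun a : ℝ => deriv riemannZeta (2 * a : ℂ) / riemannZeta (2 * a : ℂ)
      + (2 * (a : ℂ) - 1)⁻¹) (𝓝[>] (1 / 2 : ℝ)) (𝓝 (Real.eulerMascheroniConstant : ℂ)) := by
    have h1 := (Asymptotics.isLittleO_one_iff ℂ).mp log_deriv_riemannZeta_add_inv_sub_sub_isLittleO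
    have h2 := h1.add_const (Real.eulerMascheroniConstant : ℂ)
    simp only [sub_add_cancel, zero_add] at h2
    have h3 : Tendsto (fun a : ℝ => (2 * a : ℂ)) (𝓝[>] (1 / 2 : ℝ)) (𝓝[≠] 1) := by
      refine tendsto_nhdsWithin_iff.mpr ⟨?_, ?_⟩
      · have : Continuous fun a : ℝ => (2 * a : ℂ) := by fun_prop
        have h := (this.tendsto (1 / 2)).mono_left (nhdsWithin_le_nhds (s := Set.Ioi (1 / 2)))
        simpa using h
      · filter_upwards [self_mem_nhdsWithin] with a ha
        have ha : 1 / 2 < a := ha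
        intro h
        have : (2 * a : ℝ) = 1 := by exact_mod_cast (show (2 * a : ℂ) = 1 from h)
        linarith
    exact h2.comp h3
  refine ⟨_, ((hA.sub hO).add hZ).congr' ?_⟩
  filter_upwards [self_mem_nhdsWithin] with a ha
  have hg := (gT_hasSum a ha).tsum_eq
  have he := (ev_sum a ha).2
  unfold gT at hg
  rw [hg, Complex.ofReal_add, he]
  ring
end

section
/- For every real a > 1 and every real λ < 0, lim_{T→∞} (1/(2π))·∫_{−T}^{T} g₁(a+it)·e^{−λ(a+it)} dt = e^{−λ/2}·Φ(e^{2λ}), where g₁(z) = ∫_{−∞}^{0} Φ(e^{2μ})·e^{μ(z−1/2)} dμ (this integral converges absolutely for Re z > 1). -/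
open Complex Filter Topology MeasureTheory Set

noncomputable def gOne (z : ℂ) : ℂ :=
  ∫ μ in Set.Iio (0 : ℝ),
    (bigPhi (Real.exp (2 * μ)) : ℂ) * Complex.exp ((μ : ℂ) * (z - 1 / 2))

lemma aux_swap (f : ℝ → ℂ) (hf : Integrable f) (T : ℝ) (hT : 0 ≤ T) :
    ∫ t in (-T)..T, ∫ u, f u * cexp (I * t * u)
      = ∫ u, f u * ∫ t in (-T)..T, cexp (I * u * t) := by
  have hle : -T ≤ T := by linarith
  simp_rw [intervalIntegral.integral_of_le hle]
  rw [integral_integral_swap]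
  · congr 1; ext u
    rw [← integral_const_mul]
    congr 1; ext t
    congr 2; ring
  · have h1 : Integrable (fun p : ℝ × ℝ => f p.2) ((volume.restrict (Ioc (-T) T)).prod volume) :=
      hf.comp_snd _
    refine h1.mul_bdd (c := 1) ?_ ?_
    · apply Continuous.aestronglyMeasurable
      fun_prop
    · filter_upwards with p
      have : I * (p.1 : ℂ) * p.2 = ((p.1 * p.2 : ℝ) : ℂ) * I := by push_cast; ring
      rw [this, Complex.norm_exp_ofReal_mul_I]

lemma aux_rl (K : ℝ → ℂ) (c : ℝ) (hc : c ≠ 0) :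
    Tendsto (fun T : ℝ => ∫ u, K u * cexp (I * u * (c * T : ℝ))) atTop (𝓝 0) := by
  have h := Real.tendsto_integral_exp_smul_cocompact K
  have h2 : Tendsto (fun T : ℝ => -(c / (2 * Real.pi)) * T) atTop (cocompact ℝ) := by
    have hne : -(c / (2 * Real.pi)) ≠ 0 := by
      have := Real.pi_pos
      simp [hc, this.ne']
    have h3 := (Homeomorph.mulLeft₀ _ hne).isClosedEmbedding.tendsto_cocompact
    exact h3.comp (tendsto_id.mono_right atTop_le_cocompact)
  refine (h.comp h2).congr fun T => ?_
  simp only [Function.comp]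
  congr 1; ext u
  rw [Circle.smul_def, Real.fourierChar_apply, smul_eq_mul, mul_comm]
  congr 2
  have : (Real.pi : ℂ) ≠ 0 := by exact_mod_cast Real.pi_ne_zero
  push_cast
  field_simp

lemma aux_zero (f : ℝ → ℂ) (hf : Integrable f) (hd : DifferentiableAt ℝ f 0) (h0 : f 0 = 0) :
    Tendsto (fun T : ℝ => ∫ t in (-T)..T, ∫ u, f u * cexp (I * t * u)) atTop (𝓝 0) := by
  set K : ℝ → ℂ := fun u => f u / (I * u) with hK
  have hKi : Integrable K := by
    obtain ⟨C, hC⟩ := hd.isBigO_sub.bound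
    obtain ⟨δ, hδ, hb⟩ := Metric.eventually_nhds_iff.1 hC
    have hi : Integrable (fun u : ℝ => (Metric.ball (0:ℝ) δ).indicator (fun _ => |C|) u + ‖f u‖ / δ) := by
      apply Integrable.add
      · rw [integrable_indicator_iff Metric.isOpen_ball.measurableSet]
        apply integrableOn_const
        · exact Metric.isBounded_ball.measure_lt_top.ne
        · simp
      · exact hf.norm.div_const _
    refine hi.mono' ?_ ?_
    · exact hf.aestronglyMeasurable.div₀ (by fun_prop)
    · filter_upwards with u
      simp only [hK, norm_div, norm_mul, norm_I, one_mul, norm_real, Real.norm_eq_abs]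
      by_cases hu : u ∈ Metric.ball (0:ℝ) δ
      · have := hb (y := u) hu
        simp only [h0, sub_zero, Real.norm_eq_abs] at this
        rw [indicator_of_mem hu]
        have h4 : ‖f u‖ / |u| ≤ |C| := by
          apply div_le_of_le_mul₀ (abs_nonneg _) (abs_nonneg _)
          exact this.trans (by gcongr; exact le_abs_self C)
        have : 0 ≤ ‖f u‖ / δ := by positivity
        linarith
      · rw [indicator_of_notMem hu, zero_add]
        have : δ ≤ |u| := by simpa using hu
        gcongr
  have hlim := (aux_rl K 1 one_ne_zero).sub (aux_rl K (-1) (by norm_num))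
  rw [sub_zero] at hlim
  refine hlim.congr' ?_
  filter_upwards [eventually_ge_atTop 0] with T hT
  rw [aux_swap f hf T hT, ← integral_sub]
  · apply integral_congr_ae
    have : ∀ᵐ u : ℝ, u ≠ 0 := by simp [ae_iff]
    filter_upwards [this] with u hu
    have hu' : I * (u : ℂ) ≠ 0 := mul_ne_zero I_ne_zero (by exact_mod_cast hu)
    rw [integral_exp_mul_complex hu', hK]
    push_cast
    simp only [one_mul, neg_mul]
    ring
  all_goals
    refine hKi.mul_bdd (c := 1) ?_ ?_
    · apply Continuous.aestronglyMeasurable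
      fun_prop
    · filter_upwards with p
      rw [mul_assoc, ← ofReal_mul, mul_comm, Complex.norm_exp_ofReal_mul_I]

lemma aux_gauss_ft (t : ℝ) : ∫ u : ℝ, cexp (-(1/2 : ℂ) * (u:ℂ)^2) * cexp (I * t * u)
    = (2 * Real.pi : ℂ) ^ (1/2 : ℂ) * cexp (-(1/2:ℂ) * (t:ℂ)^2) := by
  have := fourierIntegral_gaussian (b := (1/2 : ℂ)) (by norm_num) (t : ℂ)
  calc _ = ∫ x : ℝ, cexp (I * t * x) * cexp (-(1/2:ℂ) * x^2) := by
        congr 1; ext u; ring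
    _ = _ := by
        rw [this]
        congr 2
        · ring
        · ring

lemma aux_gauss_int : Integrable (fun u : ℝ => cexp (-(1/2 : ℂ) * (u:ℂ)^2)) :=
  integrable_cexp_neg_mul_sq (by norm_num)

lemma aux_gauss : Tendsto (fun T : ℝ => ∫ t in (-T)..T, ∫ u : ℝ, cexp (-(1/2 : ℂ) * (u:ℂ)^2) * cexp (I * t * u))
    atTop (𝓝 (2 * Real.pi)) := by
  simp_rw [aux_gauss_ft]
  have h := intervalIntegral_tendsto_integral
    (aux_gauss_int.const_mul ((2 * Real.pi : ℂ) ^ (1/2 : ℂ))) tendsto_neg_atTop_atBot tendsto_id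
  simp only [id] at h
  convert h using 2
  rw [integral_const_mul, integral_gaussian_complex (by norm_num)]
  have h2 : (2 * Real.pi : ℂ) ≠ 0 := by
    have := Real.pi_ne_zero
    exact_mod_cast (by positivity : (2 * Real.pi : ℝ) ≠ 0)
  have : (Real.pi / (1/2) : ℂ) = 2 * Real.pi := by ring
  rw [this, ← Complex.cpow_add _ _ h2]
  norm_num

lemma aux_inv (f : ℝ → ℂ) (hf : Integrable f) (hd : DifferentiableAt ℝ f 0) :
    Tendsto (fun T : ℝ => ∫ t in (-T)..T, ∫ u, f u * cexp (I * t * u)) atTop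
      (𝓝 (2 * Real.pi * f 0)) := by
  have hg := aux_gauss_int
  set G : ℝ → ℂ := fun u => cexp (-(1/2 : ℂ) * (u:ℂ)^2) with hG
  have hG0 : G 0 = 1 := by simp [hG]
  have hGd : DifferentiableAt ℝ G 0 := by
    have : DifferentiableAt ℝ (fun u : ℝ => (u : ℂ)) 0 := Complex.ofRealCLM.differentiableAt
    simp only [hG]
    fun_prop
  have h1 := aux_zero (fun u => f u - f 0 * G u) (hf.sub (hg.const_mul _))
    (hd.sub (hGd.const_mul _)) (by simp [hG0])
  have h2 := h1.add (aux_gauss.const_mul (f 0))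
  rw [zero_add, mul_comm] at h2
  refine h2.congr' ?_
  filter_upwards [eventually_ge_atTop 0] with T hT
  have key : ∀ F : ℝ → ℂ, Integrable F → ∀ t : ℝ, Integrable (fun u : ℝ => F u * cexp (I * t * u)) := by
    intro F hF t
    refine hF.mul_bdd (c := 1) ?_ ?_
    · apply Continuous.aestronglyMeasurable
      fun_prop
    · filter_upwards with p
      rw [mul_assoc, ← ofReal_mul, mul_comm, Complex.norm_exp_ofReal_mul_I]
  have e := aux_swap f hf T hT
  have e1 := aux_swap _ (hf.sub (hg.const_mul (f 0))) T hT
  have e2 := aux_swap _ hg T hT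
  have bd : ∀ F : ℝ → ℂ, Integrable F →
      Integrable (fun u : ℝ => F u * ∫ t in (-T)..T, cexp (I * u * t)) := by
    intro F hF
    refine hF.mul_bdd (c := 1 * |T - (-T)|) ?_ ?_
    · apply Continuous.aestronglyMeasurable
      apply intervalIntegral.continuous_parametric_intervalIntegral_of_continuous' 
      fun_prop
    · filter_upwards with u
      apply intervalIntegral.norm_integral_le_of_norm_le_const
      intro t _
      rw [mul_assoc, ← ofReal_mul, mul_comm, Complex.norm_exp_ofReal_mul_I]
  simp only [hG] at e1 e2 ⊢
  simp only [Pi.sub_apply] at e1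
  rw [e, e1, e2, ← integral_const_mul, ← integral_add]
  · congr 1; ext u; ring
  · exact bd _ (hf.sub (hg.const_mul (f 0)))
  · exact (bd _ hg).const_mul _
lemma aux_sum (s : ℝ) (hs : 1/2 < s) :
    Summable (fun p : Nat.Primes => Real.log (p : ℕ) * ((p : ℕ) : ℝ) ^ (-2 * s)) := by
  have h : Summable (fun n : ℕ => Real.log n * (n : ℝ) ^ (-2 * s)) := by
    have hd : 0 < s - 1/2 := by linarith
    have h1 : Summable (fun n : ℕ => (n : ℝ) ^ (-(s + 1/2)) / (s - 1/2)) :=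
      (Real.summable_nat_rpow.2 (by linarith)).div_const _
    refine Summable.of_nonneg_of_le (fun n => ?_) (fun n => ?_) h1
    · exact mul_nonneg (Real.log_natCast_nonneg n) (by positivity)
    · rcases Nat.eq_zero_or_pos n with rfl | hn
      · simp only [Nat.cast_zero, Real.log_zero, zero_mul]
        exact div_nonneg (Real.rpow_nonneg le_rfl _) hd.le
      · have hn' : (0:ℝ) < n := by exact_mod_cast hn
        have := Real.log_le_rpow_div hn'.le hd
        calc _ ≤ (n:ℝ) ^ (s - 1/2) / (s - 1/2) * (n : ℝ) ^ (-2 * s) := by gcongr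
          _ = _ := by
            rw [div_mul_eq_mul_div, ← Real.rpow_add hn']
            congr 2; ring
  exact h.comp_injective Subtype.val_injective

lemma aux_term (s : ℝ) (hs : 1/2 < s) (hs1 : s ≤ 1) (x : ℝ) (hx : 0 < x) (p : Nat.Primes) :
    Real.log (p : ℕ) * Real.exp (-((p : ℕ) : ℝ) ^ 2 * Real.pi * x)
      ≤ Real.log (p : ℕ) * ((p : ℕ) : ℝ) ^ (-2 * s) * x ^ (-s) := by
  have hp : (0:ℝ) < (p : ℕ) := by exact_mod_cast p.2.pos
  rw [mul_assoc (Real.log _) (_ ^ (-2 * s))]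
  refine mul_le_mul_of_nonneg_left ?_ (Real.log_natCast_nonneg _)
  set q : ℝ := ((p : ℕ) : ℝ)
  set y : ℝ := q ^ 2 * x with hy
  have hy0 : 0 < y := by positivity
  have e1 : q ^ (-2 * s) * x ^ (-s) = y ^ (-s) := by
    rw [hy, Real.mul_rpow (by positivity) hx.le, ← Real.rpow_natCast, ← Real.rpow_mul hp.le]
    congr 2; push_cast; ring
  rw [e1]
  have h1 : -q ^ 2 * Real.pi * x ≤ -y := by
    have := Real.pi_gt_three
    rw [hy]; nlinarith
  refine (Real.exp_le_exp.2 h1).trans ?_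
  rw [Real.exp_neg, Real.rpow_neg hy0.le]
  apply inv_anti₀ (by positivity)
  have hexp := Real.add_one_le_exp y
  rcases le_total y 1 with h | h
  · have := Real.rpow_le_one hy0.le h (by linarith : 0 ≤ s)
    linarith
  · have := Real.rpow_le_rpow_of_exponent_le h hs1
    rw [Real.rpow_one] at this
    linarith

lemma aux_phi_summable (x : ℝ) (hx : 0 < x) : Summable (fun p : Nat.Primes =>
    Real.log (p : ℕ) * Real.exp (-((p : ℕ) : ℝ) ^ 2 * Real.pi * x)) :=
  Summable.of_nonneg_of_le
    (fun p => mul_nonneg (Real.log_natCast_nonneg _) (Real.exp_pos _).le)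
    (aux_term 1 (by norm_num) le_rfl x hx) ((aux_sum 1 (by norm_num)).mul_right _)

lemma aux_phi_bound (s : ℝ) (hs : 1/2 < s) (hs1 : s ≤ 1) :
    ∃ C : ℝ, 0 ≤ C ∧ ∀ x : ℝ, 0 < x → |primePhi x| ≤ C * x ^ (-s) := by
  refine ⟨∑' p : Nat.Primes, Real.log (p : ℕ) * ((p : ℕ) : ℝ) ^ (-2 * s), ?_, fun x hx => ?_⟩
  · exact tsum_nonneg fun p => mul_nonneg (Real.log_natCast_nonneg _) (by positivity)
  · unfold primePhi
    rw [abs_of_nonneg (tsum_nonneg fun p =>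
      mul_nonneg (Real.log_natCast_nonneg _) (Real.exp_pos _).le), ← tsum_mul_right]
    exact (aux_phi_summable x hx).tsum_le_tsum (aux_term s hs hs1 x hx)
      ((aux_sum s hs).mul_right _)

lemma aux_phi_diff (x : ℝ) (hx : 0 < x) : DifferentiableAt ℝ primePhi x := by
  set F : ℂ → ℂ := fun w => ∑' p : Nat.Primes,
    (Real.log (p : ℕ) : ℂ) * cexp (-((p : ℕ) : ℂ) ^ 2 * Real.pi * w) with hF
  have hU : IsOpen {w : ℂ | x / 2 < w.re} := isOpen_lt continuous_const continuous_re
  have h : DifferentiableOn ℂ F {w : ℂ | x / 2 < w.re} := by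
    refine differentiableOn_tsum_of_summable_norm (aux_phi_summable (x/2) (by positivity)) ?_ hU ?_
    · intro p; fun_prop
    · intro p w hw
      rw [norm_mul, norm_real, Real.norm_of_nonneg (Real.log_natCast_nonneg _), Complex.norm_exp]
      refine mul_le_mul_of_nonneg_left ?_ (Real.log_natCast_nonneg _)
      apply Real.exp_le_exp.2
      have : (-((p : ℕ) : ℂ) ^ 2 * Real.pi * w).re = -((p : ℕ) : ℝ) ^ 2 * Real.pi * w.re := by
        have : (-((p : ℕ) : ℂ) ^ 2 * Real.pi * w) = ((-((p : ℕ) : ℝ) ^ 2 * Real.pi : ℝ) : ℂ) * w := by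
          push_cast; ring
        rw [this, re_ofReal_mul]
      rw [this]
      have hw' : x / 2 < w.re := hw
      have : 0 ≤ ((p : ℕ) : ℝ) ^ 2 * Real.pi := by have := Real.pi_pos; positivity
      nlinarith
  have hd : DifferentiableAt ℂ F (x : ℂ) :=
    h.differentiableAt (hU.mem_nhds (by simp; linarith))
  have hr := hd.hasDerivAt.real_of_complex
  have e : (fun y : ℝ => (F y).re) = primePhi := by
    ext y
    have : F y = ((primePhi y : ℝ) : ℂ) := by
      simp only [hF, primePhi]
      push_cast
      rfl
    rw [this, ofReal_re]
  rw [e] at hr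
  exact hr.differentiableAt

lemma aux_big_diff (x : ℝ) (hx : 0 < x) : DifferentiableAt ℝ bigPhi x := by
  have h1 := aux_phi_diff x hx
  have h2 : DifferentiableAt ℝ (fun y : ℝ => y ^ ((1:ℝ)/4)) x :=
    (Real.hasDerivAt_rpow_const (Or.inl hx.ne')).differentiableAt
  have h3 : DifferentiableAt ℝ Real.sqrt x := (Real.hasDerivAt_sqrt hx.ne').differentiableAt
  unfold bigPhi
  exact (((h3.const_mul 2).mul h1).sub_const 1).div h2 (Real.rpow_pos_of_pos hx _).ne'

lemma aux_integrand_diff (z : ℂ) : Differentiable ℝ (fun μ : ℝ =>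
          (bigPhi (Real.exp (2 * μ)) : ℂ) * Complex.exp ((μ : ℂ) * (z - 1 / 2))) := by
  intro μ
  have h1 : DifferentiableAt ℝ (fun μ : ℝ => bigPhi (Real.exp (2 * μ))) μ :=
    DifferentiableAt.comp μ (f := fun μ : ℝ => Real.exp (2 * μ)) (aux_big_diff _ (Real.exp_pos _)) (by fun_prop)
  have h2 : DifferentiableAt ℝ (fun μ : ℝ => ((bigPhi (Real.exp (2 * μ)) : ℝ) : ℂ)) μ :=
    Complex.ofRealCLM.differentiableAt.comp μ h1
  have h3 : DifferentiableAt ℝ (fun u : ℝ => (u : ℂ)) μ := Complex.ofRealCLM.differentiableAt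
  fun_prop

lemma aux_integrand_int (z : ℂ) (hz : 1 < z.re) : IntegrableOn (fun μ : ℝ =>
          (bigPhi (Real.exp (2 * μ)) : ℂ) * Complex.exp ((μ : ℂ) * (z - 1 / 2)))
        (Set.Iio (0 : ℝ)) volume := by
  set b := z.re with hb
  obtain ⟨s, hs, hs1, hsb⟩ : ∃ s : ℝ, 1/2 < s ∧ s ≤ 1 ∧ 2 * s < b := by
    refine ⟨min ((1 + b)/4) 1, ?_, min_le_right _ _, ?_⟩
    · apply lt_min <;> linarith
    · have := min_le_left ((1 + b)/4) 1
      linarith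
  obtain ⟨C, hC0, hC⟩ := aux_phi_bound s hs hs1
  have hi : IntegrableOn (fun μ : ℝ => 2 * C * Real.exp ((b - 2 * s) * μ) + Real.exp ((b - 1) * μ))
      (Iio 0) := by
    refine Integrable.mono_measure ?_ (Measure.restrict_mono Iio_subset_Iic_self le_rfl)
    exact ((integrableOn_exp_mul_Iic (by linarith) 0).const_mul _).add
      (integrableOn_exp_mul_Iic (by linarith) 0)
  refine hi.mono' (aux_integrand_diff z).continuous.aestronglyMeasurable ?_
  filter_upwards with μ
  have hre : ((μ : ℂ) * (z - 1 / 2)).re = μ * (b - 1/2) := by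
    rw [re_ofReal_mul]; simp [hb]
  rw [norm_mul, norm_real, Complex.norm_exp, hre, Real.norm_eq_abs]
  unfold bigPhi
  have e1 : Real.sqrt (Real.exp (2 * μ)) = Real.exp μ := by
    rw [Real.sqrt_eq_iff_mul_self_eq (Real.exp_pos _).le (Real.exp_pos _).le, ← Real.exp_add]
    congr 1; ring
  have e2 : Real.exp (2 * μ) ^ ((1:ℝ)/4) = Real.exp (μ / 2) := by
    rw [← Real.exp_mul]; congr 1; ring
  have e3 : Real.exp (2 * μ) ^ (-s) = Real.exp (-2 * s * μ) := by
    rw [← Real.exp_mul]; congr 1; ring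
  have h := hC (Real.exp (2 * μ)) (Real.exp_pos _)
  rw [e3] at h
  rw [e1, e2, abs_div, abs_of_pos (Real.exp_pos (μ/2))]
  set P := primePhi (Real.exp (2 * μ))
  have h5 : |2 * Real.exp μ * P - 1| ≤ 2 * Real.exp μ * (C * Real.exp (-2 * s * μ)) + 1 := by
    refine (abs_sub _ _).trans ?_
    rw [abs_mul, abs_of_pos (by positivity : 0 < 2 * Real.exp μ), abs_one]
    gcongr
  calc _ ≤ (2 * Real.exp μ * (C * Real.exp (-2 * s * μ)) + 1) / Real.exp (μ/2) * Real.exp (μ * (b - 1/2)) := by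
        gcongr
    _ = 2 * C * (Real.exp μ * Real.exp (-2 * s * μ) * Real.exp (-(μ/2)) * Real.exp (μ * (b - 1/2)))
         + Real.exp (-(μ/2)) * Real.exp (μ * (b - 1/2)) := by
        rw [Real.exp_neg]; field_simp
    _ = _ := by
        simp only [← Real.exp_add]
        congr 3 <;> ring_nf

/-- For real a > 1 and real λ < 0,
lim_{T→∞} (1/(2π))·∫_{−T}^{T} g₁(a+it)·e^{−λ(a+it)} dt = e^{−λ/2}·Φ(e^{2λ}),
where the integral defining g₁ converges absolutely for Re z > 1. -/
theorem stmt_12 (a : ℝ) (ha : 1 < a) (l : ℝ) (hl : l < 0) :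
    (∀ z : ℂ, 1 < z.re →
      MeasureTheory.IntegrableOn (fun μ : ℝ =>
          (bigPhi (Real.exp (2 * μ)) : ℂ) * Complex.exp ((μ : ℂ) * (z - 1 / 2)))
        (Set.Iio (0 : ℝ)) MeasureTheory.volume) ∧
    Tendsto (fun T : ℝ =>
        (1 / (2 * Real.pi) : ℂ) *
          ∫ t in (-T)..T,
            gOne ((a : ℂ) + Complex.I * t)
              * Complex.exp (-(l : ℂ) * ((a : ℂ) + Complex.I * t)))
      atTop (𝓝 ((Real.exp (-l / 2) * bigPhi (Real.exp (2 * l)) : ℝ) : ℂ)) := by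
  refine ⟨aux_integrand_int, ?_⟩
  set g : ℝ → ℂ := fun μ : ℝ =>
    (bigPhi (Real.exp (2 * μ)) : ℂ) * Complex.exp ((μ : ℂ) * ((a:ℂ) - 1 / 2)) with hg
  set F : ℝ → ℂ := (Iio (0:ℝ)).indicator g with hF
  have hFi : Integrable F :=
    (integrable_indicator_iff measurableSet_Iio).2 (aux_integrand_int (a : ℂ) (by simpa using ha))
  have hFd : DifferentiableAt ℝ F l := by
    refine (aux_integrand_diff (a:ℂ) l).congr_of_eventuallyEq ?_
    filter_upwards [Iio_mem_nhds hl] with x hx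
    exact indicator_of_mem hx _
  have hd : DifferentiableAt ℝ (fun u => F (u + l)) 0 := by
    have : DifferentiableAt ℝ F (0 + l) := by rwa [zero_add]
    exact this.comp (0:ℝ) (by fun_prop : DifferentiableAt ℝ (fun u : ℝ => u + l) 0)
  have key := ((aux_inv (fun u => F (u + l)) (hFi.comp_add_right l) hd).const_mul
    (cexp (-(l:ℂ) * a))).const_mul (1 / (2 * Real.pi) : ℂ)
  have hpi : (Real.pi : ℂ) ≠ 0 := by exact_mod_cast Real.pi_ne_zero
  have hlim : (1 / (2 * Real.pi) : ℂ) * (cexp (-(l:ℂ) * a) * (2 * Real.pi * F (0 + l)))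
      = ((Real.exp (-l / 2) * bigPhi (Real.exp (2 * l)) : ℝ) : ℂ) := by
    rw [zero_add, hF, indicator_of_mem (show l ∈ Iio (0:ℝ) from hl), hg]
    have : cexp (-(l:ℂ) / 2) = cexp (-(l:ℂ) * a) * cexp ((l:ℂ) * (a - 1/2)) := by
      rw [← Complex.exp_add]; congr 1; ring
    push_cast
    rw [this]
    field_simp
  rw [hlim] at key
  refine key.congr fun T => ?_
  congr 1
  rw [← intervalIntegral.integral_const_mul]
  apply intervalIntegral.integral_congr
  intro t _
  simp only
  have h1 : ∫ u, F (u + l) * cexp (I * t * u) = ∫ u, F u * cexp (I * t * ((u - l : ℝ) : ℂ)) := by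
    rw [← integral_add_right_eq_self (fun u : ℝ => F u * cexp (I * t * ((u - l : ℝ) : ℂ))) l]
    simp
  rw [h1, gOne, ← integral_indicator measurableSet_Iio, ← integral_const_mul, ← integral_mul_const]
  congr 1; ext u
  by_cases hu : u ∈ Iio (0:ℝ)
  · rw [hF, indicator_of_mem hu, indicator_of_mem hu, hg]
    simp only
    have : cexp (-(l:ℂ) * a) * (cexp ((u:ℂ) * (a - 1/2)) * cexp (I * t * ((u - l : ℝ) : ℂ)))
        = cexp ((u:ℂ) * (a + I * t - 1/2)) * cexp (-(l:ℂ) * (a + I * t)) := by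
      simp only [← Complex.exp_add]
      congr 1; push_cast; ring
    linear_combination (bigPhi (Real.exp (2 * u)) : ℂ) * this
  · rw [hF, indicator_of_notMem hu, indicator_of_notMem hu]; simp
end

section
/- lim_{x→0⁺} 2√x·∑_p (log p)·e^{−p²πx} = 1, the sum ranging over all prime numbers p; equivalently, 2√x·φ(x) − 1 = o(1) as x → 0⁺. -/
open Complex Filter Topology

namespace PG
open MeasureTheory SchwartzMap
open scoped FourierTransform ContDiff

/-- weights -/
noncomputable def w (n : ℕ) : ℝ := ArithmeticFunction.vonMangoldt n / n

lemma w_nonneg (n : ℕ) : 0 ≤ w n :=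
  div_nonneg ArithmeticFunction.vonMangoldt_nonneg n.cast_nonneg

lemma shift_bound {a b c : ℝ} (h : |b - c| ≤ 1) :
    1 / (1 + (a - b) ^ 2) ≤ 3 * (1 / (1 + (a - c) ^ 2)) := by
  rw [mul_one_div, div_le_div_iff₀ (by positivity) (by positivity)]
  have h2 : (b - c) ^ 2 ≤ 1 := by
    rw [← sq_abs]; exact pow_le_one₀ (abs_nonneg _) h
  nlinarith [sq_nonneg ((a - b) - (b - c))]

lemma block_bound (s : Finset ℕ) (k : ℤ) :
    ∑ n ∈ s with ⌊Real.log ((n : ℕ) : ℝ)⌋ = k, w n ≤ (Real.log 4 + 4) * Real.exp 1 := by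
  have h1 : ∀ n ∈ s.filter (fun n : ℕ => ⌊Real.log n⌋ = k),
      w n ≤ Real.exp (-k) * (if n ∈ Finset.Ioc 0 ⌊Real.exp (k + 1)⌋₊ then
        ArithmeticFunction.vonMangoldt n else 0) := by
    intro n hn
    rw [Finset.mem_filter, Int.floor_eq_iff] at hn
    obtain ⟨-, h1, h2⟩ := hn
    rcases Nat.eq_zero_or_pos n with rfl | hpos
    · simp [w]
    have hn0 : (0 : ℝ) < n := by exact_mod_cast hpos
    have h3 : (n : ℝ) < Real.exp (k + 1) := (Real.log_lt_iff_lt_exp hn0).1 h2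
    have h4 : Real.exp k ≤ n := (Real.le_log_iff_exp_le hn0).1 h1
    rw [if_pos (by rw [Finset.mem_Ioc]; exact ⟨hpos, Nat.le_floor h3.le⟩), w, div_eq_inv_mul,
      Real.exp_neg]
    gcongr
  calc _ ≤ _ := Finset.sum_le_sum h1
    _ = Real.exp (-k) * ∑ n ∈ s with ⌊Real.log ((n : ℕ) : ℝ)⌋ = k, (if n ∈ Finset.Ioc 0 ⌊Real.exp (k + 1)⌋₊ then
        ArithmeticFunction.vonMangoldt n else 0) := by rw [Finset.mul_sum]
    _ ≤ Real.exp (-k) * Chebyshev.psi (Real.exp (k + 1)) := by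
        gcongr
        rw [← Finset.sum_filter, Chebyshev.psi]
        apply Finset.sum_le_sum_of_subset_of_nonneg
        · intro n hn
          exact (Finset.mem_filter.1 hn).2
        · intros; exact ArithmeticFunction.vonMangoldt_nonneg
    _ ≤ Real.exp (-k) * ((Real.log 4 + 4) * Real.exp (k + 1)) := by
        gcongr
        exact Chebyshev.psi_le_const_mul_self (Real.exp_pos _).le
    _ = _ := by
        rw [Real.exp_add, Real.exp_neg]
        have := Real.exp_ne_zero (k : ℝ)
        field_simp

lemma summable_int : Summable (fun j : ℤ => 1 / (1 + (j : ℝ) ^ 2)) := by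
  have := (Real.summable_one_div_int_pow (p := 2)).2 (by norm_num)
  refine this.of_norm_bounded_eventually ?_
  have : ∀ᶠ j : ℤ in cofinite, j ≠ 0 := by
    simpa using (Set.finite_singleton (0 : ℤ)).compl_mem_cofinite
  filter_upwards [this] with j hj
  have : (0 : ℝ) < (j : ℝ) ^ 2 := by positivity
  rw [Real.norm_of_nonneg (by positivity)]
  gcongr
  linarith

lemma exists_bound : ∃ C : ℝ, 0 ≤ C ∧ ∀ y : ℝ, Summable (fun n : ℕ => w n * (1 / (1 + (y - Real.log n) ^ 2))) ∧
    ∑' n : ℕ, w n * (1 / (1 + (y - Real.log n) ^ 2)) ≤ C := by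
  set B := (Real.log 4 + 4) * Real.exp 1 with hB
  have hB0 : 0 ≤ B := by have := Real.log_nonneg (x := 4) (by norm_num); positivity
  set T := ∑' j : ℤ, 1 / (1 + (j : ℝ) ^ 2) with hT
  have hT0 : 0 ≤ T := tsum_nonneg fun j => by positivity
  refine ⟨9 * B * T, by positivity, fun y => ?_⟩
  have nn : ∀ n : ℕ, 0 ≤ w n * (1 / (1 + (y - Real.log n) ^ 2)) :=
    fun n => mul_nonneg (w_nonneg n) (by positivity)
  have key : ∀ s : Finset ℕ, ∑ n ∈ s, w n * (1 / (1 + (y - Real.log n) ^ 2)) ≤ 9 * B * T := by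
    intro s
    rw [← Finset.sum_fiberwise_of_maps_to (t := s.image fun n : ℕ => ⌊Real.log n⌋)
      (g := fun n : ℕ => ⌊Real.log n⌋) (fun n hn => Finset.mem_image_of_mem _ hn)]
    set F := s.image fun n : ℕ => ⌊Real.log n⌋
    calc _ ≤ ∑ k ∈ F, B * (9 * (1 / (1 + ((⌊y⌋ - k : ℤ) : ℝ) ^ 2))) := by
          apply Finset.sum_le_sum
          intro k hk
          calc _ ≤ ∑ n ∈ s with ⌊Real.log ((n : ℕ) : ℝ)⌋ = k, w n * (9 * (1 / (1 + ((⌊y⌋ - k : ℤ) : ℝ) ^ 2))) := by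
                apply Finset.sum_le_sum
                intro n hn
                have hk : ⌊Real.log n⌋ = k := (Finset.mem_filter.1 hn).2
                have h1 := shift_bound (a := y) (b := Real.log n) (c := k) (by
                  rw [← hk, abs_le]; constructor <;> linarith [Int.floor_le (Real.log n), Int.lt_floor_add_one (Real.log n)])
                have h2 := shift_bound (a := k) (b := y) (c := ⌊y⌋) (by
                  rw [abs_le]; constructor <;> linarith [Int.floor_le y, Int.lt_floor_add_one y])
                rw [show ((k : ℝ) - y) ^ 2 = (y - k) ^ 2 by ring] at h2
                push_cast
                rw [show ((k : ℝ) - ⌊y⌋) ^ 2 = (⌊y⌋ - k : ℝ) ^ 2 by ring] at h2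
                apply mul_le_mul_of_nonneg_left _ (w_nonneg n)
                linarith
            _ = (∑ n ∈ s with ⌊Real.log ((n : ℕ) : ℝ)⌋ = k, w n) * (9 * (1 / (1 + ((⌊y⌋ - k : ℤ) : ℝ) ^ 2))) := by
                rw [Finset.sum_mul]
            _ ≤ _ := by
                gcongr
                exact block_bound s k
      _ = 9 * B * ∑ k ∈ F, (1 / (1 + ((⌊y⌋ - k : ℤ) : ℝ) ^ 2)) := by
          rw [Finset.mul_sum]; apply Finset.sum_congr rfl; intros; ring
      _ ≤ 9 * B * T := by
          gcongr
          have e := (Equiv.subLeft ⌊y⌋).summable_iff.2 summable_int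
          have e2 := (Equiv.subLeft ⌊y⌋).tsum_eq (fun j : ℤ => 1 / (1 + (j : ℝ) ^ 2))
          rw [hT, ← e2]
          exact e.sum_le_tsum F (fun j _ => by positivity)
  exact ⟨summable_of_sum_le nn key, Real.tsum_le_of_sum_le nn key⟩

/-- seminorm -/
noncomputable def q (f : 𝓢(ℝ, ℂ)) : ℝ :=
  SchwartzMap.seminorm ℂ 0 0 f + SchwartzMap.seminorm ℂ 2 0 f

lemma q_nonneg (f : 𝓢(ℝ, ℂ)) : 0 ≤ q f := by unfold q; positivity

lemma norm_le_q (f : 𝓢(ℝ, ℂ)) (v : ℝ) : ‖f v‖ ≤ q f * (1 / (1 + v ^ 2)) := by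
  have h0 := le_seminorm' ℂ 0 0 f v
  have h2 := le_seminorm' ℂ 2 0 f v
  simp only [iteratedDeriv_zero, pow_zero, one_mul, sq_abs] at h0 h2
  rw [mul_one_div, le_div_iff₀ (by positivity), q]
  linarith

noncomputable def S (f : 𝓢(ℝ, ℂ)) (y : ℝ) : ℂ := ∑' n : ℕ, (w n : ℂ) * f (y - Real.log n)

lemma S_term_norm (f : 𝓢(ℝ, ℂ)) (y : ℝ) (n : ℕ) : ‖(w n : ℂ) * f (y - Real.log n)‖ ≤
    q f * (w n * (1 / (1 + (y - Real.log n) ^ 2))) := by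
  rw [norm_mul, Complex.norm_real, Real.norm_of_nonneg (w_nonneg n), mul_left_comm]
  exact mul_le_mul_of_nonneg_left (norm_le_q _ _) (w_nonneg n)

lemma S_summable (f : 𝓢(ℝ, ℂ)) (y : ℝ) : Summable fun n : ℕ => (w n : ℂ) * f (y - Real.log n) := by
  obtain ⟨C, -, hC⟩ := exists_bound
  exact Summable.of_norm_bounded ((hC y).1.mul_left (q f)) (S_term_norm f y)

lemma exists_S_bound : ∃ C : ℝ, 0 ≤ C ∧ ∀ f y, ‖S f y‖ ≤ C * q f := by
  obtain ⟨C, h0, hC⟩ := exists_bound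
  refine ⟨C, h0, fun f y => ?_⟩
  refine (tsum_of_norm_bounded ((hC y).1.mul_left (q f)).hasSum (S_term_norm f y)).trans ?_
  rw [tsum_mul_left, mul_comm]
  exact mul_le_mul_of_nonneg_right (hC y).2 (q_nonneg f)

lemma exists_int_bound : ∃ C : ℝ, 0 ≤ C ∧ ∀ f : 𝓢(ℝ, ℂ), ‖∫ v, f v‖ ≤ C * q f := by
  refine ⟨∫ v : ℝ, 1 / (1 + v ^ 2), integral_nonneg fun v => by positivity, fun f => ?_⟩
  rw [mul_comm, ← integral_const_mul]
  refine norm_integral_le_of_norm_le ?_ (Eventually.of_forall (norm_le_q f))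
  simpa [one_div] using integrable_inv_one_add_sq.const_mul (q f)

lemma S_sub (f g : 𝓢(ℝ, ℂ)) (y : ℝ) : S (f - g) y = S f y - S g y := by
  unfold S
  rw [← (S_summable f y).tsum_sub (S_summable g y)]
  simp [mul_sub]

lemma cutoff_exists : ∃ ρ : ℝ → ℂ, ContDiff ℝ ∞ ρ ∧ (∀ t, |t| < 1 → ρ t = 0) ∧
    HasCompactSupport (fun t => ρ t + 1) ∧ ∀ i, ∃ M : ℝ, 0 ≤ M ∧ ∀ t, ‖iteratedDeriv i ρ t‖ ≤ M := by
  let χ : ContDiffBump (0 : ℝ) := ⟨1, 2, by norm_num, by norm_num⟩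
  have hs : ContDiff ℝ ∞ (fun t => ((χ t : ℝ) : ℂ)) :=
    Complex.ofRealCLM.contDiff.comp χ.contDiff
  have hc : HasCompactSupport (fun t => ((χ t : ℝ) : ℂ)) :=
    χ.hasCompactSupport.comp_left (g := fun x : ℝ => (x : ℂ)) (by simp)
  refine ⟨fun t => ((χ t : ℝ) : ℂ) - 1, hs.sub contDiff_const, ?_, by simpa using hc, ?_⟩
  · intro t ht
    have : χ t = 1 := χ.one_of_mem_closedBall (by simpa using ht.le)
    simp [this]
  · intro i
    let X : 𝓢(ℝ, ℂ) := hc.toSchwartzMap hs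
    refine ⟨SchwartzMap.seminorm ℂ 0 i X + 1, by positivity, fun t => ?_⟩
    have h1 := le_seminorm' ℂ 0 i X t
    have hX : (X : ℝ → ℂ) = fun t => ((χ t : ℝ) : ℂ) := rfl
    rw [pow_zero, one_mul, hX] at h1
    rw [iteratedDeriv_fun_sub (hs.contDiffAt.of_le (by exact_mod_cast le_top)) contDiffAt_const]
    refine (norm_sub_le _ _).trans (add_le_add h1 ?_)
    rw [iteratedDeriv_const]
    split_ifs <;> simp

lemma approx (h : 𝓢(ℝ, ℂ)) : ∃ g : ℕ → 𝓢(ℝ, ℂ), (∀ N, HasCompactSupport (g N)) ∧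
    Tendsto g atTop (𝓝 h) := by
  obtain ⟨ρ, hρs, hρ0, hρc, hM⟩ := cutoff_exists
  choose M hM0 hM using hM
  let c : ℕ → ℝ := fun N => 1 / ((N : ℝ) + 1)
  have hc0 : ∀ N, 0 < c N := fun N => by positivity
  have hc1 : ∀ N, c N ≤ 1 := fun N => by
    simp only [c]; rw [div_le_one (by positivity)]; linarith [N.cast_nonneg (α := ℝ)]
  have hs : ∀ N, ContDiff ℝ ∞ (fun t => ρ (c N * t)) := fun N =>
    hρs.comp (contDiff_const.mul contDiff_id)
  have hgs : ∀ N, ContDiff ℝ ∞ (fun t => (ρ (c N * t) + 1) * h t) := fun N =>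
    ((hs N).add contDiff_const).mul (h.smooth ⊤)
  have hgc : ∀ N, HasCompactSupport (fun t => (ρ (c N * t) + 1) * h t) := fun N => by
    have : HasCompactSupport (fun t => (ρ (c N * t) + 1)) :=
      hρc.comp_homeomorph (Homeomorph.mulLeft₀ (c N) (hc0 N).ne')
    exact this.mul_right
  refine ⟨fun N => (hgc N).toSchwartzMap (hgs N), hgc, ?_⟩
  have hcT : Tendsto c atTop (𝓝 0) := tendsto_one_div_add_atTop_nhds_zero_nat
  rw [(schwartz_withSeminorms ℂ ℝ ℂ).tendsto_nhds]
  rintro ⟨k, n⟩ ε hε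
  have hb : ∀ N i t, ‖iteratedDeriv i (fun t => ρ (c N * t)) t‖ ≤ M i * (c N * |t|) := by
    intro N i t
    rw [iteratedDeriv_comp_const_smul (hρs.of_le (by exact_mod_cast le_top))]
    beta_reduce
    by_cases ht : |c N * t| < 1
    · have : ρ =ᶠ[𝓝 (c N * t)] fun _ => 0 := by
        filter_upwards [(isOpen_lt continuous_abs continuous_const).mem_nhds ht] with u hu
        exact hρ0 u hu
      rw [this.iteratedDeriv_eq]
      have := hM0 i
      have := hc0 N
      simp only [iteratedDeriv_const]
      simp
      positivity
    · push Not at ht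
      rw [abs_mul, abs_of_pos (hc0 N)] at ht
      rw [norm_smul, norm_pow, Real.norm_of_nonneg (hc0 N).le]
      calc _ ≤ 1 * M i := mul_le_mul (pow_le_one₀ (hc0 N).le (hc1 N)) (hM _ _) (norm_nonneg _) zero_le_one
        _ ≤ _ := by rw [one_mul]; exact le_mul_of_one_le_right (hM0 i) ht
  set A := ∑ i ∈ Finset.range (n + 1), (n.choose i : ℝ) * M i * SchwartzMap.seminorm ℂ (k + 1) (n - i) h
  have hA : 0 ≤ A := Finset.sum_nonneg fun i _ => by have := hM0 i; positivity
  have key : ∀ N, SchwartzMap.seminorm ℂ k n ((hgc N).toSchwartzMap (hgs N) - h) ≤ c N * A := by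
    intro N
    apply seminorm_le_bound' ℂ k n _ (mul_nonneg (hc0 N).le hA)
    intro t
    have e : ((((hgc N).toSchwartzMap (hgs N) - h : 𝓢(ℝ, ℂ))) : ℝ → ℂ) =
        fun t => ρ (c N * t) * h t := by
      ext t
      change (ρ (c N * t) + 1) * h t - h t = _
      ring
    rw [e, ← norm_iteratedFDeriv_eq_norm_iteratedDeriv]
    have := norm_iteratedFDeriv_mul_le (hs N) (h.smooth ⊤) t (n := n)
      (by exact_mod_cast le_top)
    refine (mul_le_mul_of_nonneg_left this (by positivity)).trans ?_
    rw [Finset.mul_sum, Finset.mul_sum]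
    apply Finset.sum_le_sum
    intro i hi
    rw [norm_iteratedFDeriv_eq_norm_iteratedDeriv, norm_iteratedFDeriv_eq_norm_iteratedDeriv]
    have h1 := hb N i t
    have h2 := le_seminorm' ℂ (k + 1) (n - i) h t
    have := hM0 i
    have := hc0 N
    calc _ ≤ |t| ^ k * ((n.choose i : ℝ) * (M i * (c N * |t|)) * ‖iteratedDeriv (n - i) h t‖) := by
          gcongr
      _ = c N * ((n.choose i : ℝ) * M i * (|t| ^ (k + 1) * ‖iteratedDeriv (n - i) h t‖)) := by ring
      _ ≤ _ := by gcongr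
  have hlim : Tendsto (fun N => c N * A) atTop (𝓝 0) := by simpa using hcT.mul_const A
  filter_upwards [hlim.eventually_lt_const hε] with N hN
  exact (key N).trans_lt hN

lemma approx' (f : 𝓢(ℝ, ℂ)) {ε : ℝ} (hε : 0 < ε) : ∃ g : 𝓢(ℝ, ℂ), HasCompactSupport g ∧
    q (𝓕⁻ g - f) < ε := by
  obtain ⟨g, hg, ht⟩ := approx (𝓕 f)
  have h1 : Tendsto (fun N => 𝓕⁻ (g N)) atTop (𝓝 f) := by
    have := ((ContinuousFourierInv.continuous_fourierInv (E := 𝓢(ℝ, ℂ)) (F := 𝓢(ℝ, ℂ))).tendsto _).comp ht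
    simpa using! this
  rw [(schwartz_withSeminorms ℂ ℝ ℂ).tendsto_nhds] at h1
  obtain ⟨N, h0, h2⟩ := ((h1 (0, 0) (ε / 2) (by positivity)).and (h1 (2, 0) (ε / 2) (by positivity))).exists
  refine ⟨g N, hg N, ?_⟩
  unfold q
  simp only [schwartzSeminormFamily_apply] at h0 h2
  linarith

/-- regular part of the logarithmic derivative -/
noncomputable def G (s : ℂ) : ℂ := ArithmeticFunction.vonMangoldt.LFunctionResidueClassAux (1 : ZMod 1) s

lemma G_cont : ContinuousOn G {s | 1 ≤ s.re} :=
  ArithmeticFunction.vonMangoldt.continuousOn_LFunctionResidueClassAux (1 : ZMod 1)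

lemma residue_eq : ArithmeticFunction.vonMangoldt.residueClass (1 : ZMod 1) =
    fun n => ArithmeticFunction.vonMangoldt n := by
  ext n
  apply Set.indicator_of_mem
  exact Subsingleton.elim _ _

lemma G_eq {s : ℂ} (hs : 1 < s.re) :
    LSeries (fun n => ((ArithmeticFunction.vonMangoldt n : ℝ) : ℂ)) s = G s + 1 / (s - 1) := by
  have := ArithmeticFunction.vonMangoldt.eqOn_LFunctionResidueClassAux (q := 1) (a := 1) isUnit_one hs
  rw [residue_eq] at this
  simp only [G]
  rw [this]
  simp

/-- exponential -/
noncomputable def e (y t : ℝ) : ℂ := cexp (2 * Real.pi * t * y * I)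

lemma e_cont (y : ℝ) : Continuous (e y) := by unfold e; fun_prop

lemma e_norm (y t : ℝ) : ‖e y t‖ = 1 := by
  rw [e, show (2 * Real.pi * t * y * I : ℂ) = ((2 * Real.pi * t * y : ℝ) : ℂ) * I by push_cast; ring]
  exact Complex.norm_exp_ofReal_mul_I _

lemma finv (g : 𝓢(ℝ, ℂ)) (y : ℝ) : (𝓕⁻ g : 𝓢(ℝ, ℂ)) y = ∫ t, e y t * g t := by
  rw [fourierInv_coe, Real.fourierInv_eq']
  congr 1; ext t
  simp only [e, smul_eq_mul]
  congr 2
  simp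
  ring

/-- damped weights -/
noncomputable def a (δ : ℝ) (n : ℕ) : ℝ := w n * (n : ℝ) ^ (-δ)

lemma a_nonneg (δ : ℝ) (n : ℕ) : 0 ≤ a δ n := mul_nonneg (w_nonneg n) (by positivity)

lemma term_eq (δ t : ℝ) (n : ℕ) :
    LSeries.term (fun n => ((ArithmeticFunction.vonMangoldt n : ℝ) : ℂ)) (1 + δ + 2 * Real.pi * t * I) n =
      a δ n * e (- Real.log n) t := by
  rcases Nat.eq_zero_or_pos n with rfl | hn
  · simp [a, w]
  have hn0 : (0 : ℝ) < n := by exact_mod_cast hn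
  have hnc : (n : ℂ) ≠ 0 := by exact_mod_cast hn.ne'
  rw [LSeries.term_of_ne_zero hn.ne', a, w, e, add_assoc, Complex.cpow_add _ _ hnc,
    Complex.cpow_add _ _ hnc, Complex.cpow_one]
  push_cast
  rw [Complex.ofReal_cpow hn0.le]
  push_cast
  rw [Complex.cpow_neg, Complex.cpow_def_of_ne_zero hnc (2 * Real.pi * t * I),
    show (2 * Real.pi * t * -(Complex.log n) * I : ℂ) = -(Complex.log n * (2 * Real.pi * t * I)) by
      ring, Complex.exp_neg]
  field_simp

lemma a_summable {δ : ℝ} (hδ : 0 < δ) : Summable (a δ) := by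
  have h : LSeriesSummable (fun n => ((ArithmeticFunction.vonMangoldt n : ℝ) : ℂ)) (1 + δ + 2 * Real.pi * (0 : ℝ) * I) :=
    ArithmeticFunction.LSeriesSummable_vonMangoldt (by simpa using hδ)
  have := h.norm
  refine this.congr fun n => ?_
  rw [term_eq, norm_mul, e_norm, mul_one, Complex.norm_real, Real.norm_of_nonneg (a_nonneg _ _)]

lemma e_add (y z t : ℝ) : e (y + z) t = e y t * e z t := by
  simp only [e, ← Complex.exp_add]; congr 1; push_cast; ring

lemma e_int (g : 𝓢(ℝ, ℂ)) (y : ℝ) : Integrable fun t => e y t * g t :=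
  g.integrable.bdd_mul (c := 1) (e_cont y).aestronglyMeasurable (Eventually.of_forall fun t => (e_norm y t).le)

lemma C1 (g : 𝓢(ℝ, ℂ)) {δ : ℝ} (hδ : 0 < δ) (y : ℝ) :
    ∑' n : ℕ, (a δ n : ℂ) * (𝓕⁻ g : 𝓢(ℝ, ℂ)) (y - Real.log n) =
      ∫ t : ℝ, e y t * g t *
        LSeries (fun n => ((ArithmeticFunction.vonMangoldt n : ℝ) : ℂ)) (1 + δ + 2 * Real.pi * t * I) := by
  have hn : ∀ n : ℕ, ∀ t, ‖(a δ n : ℂ) * (e (y - Real.log n) t * g t)‖ = a δ n * ‖g t‖ := by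
    intro n t
    rw [norm_mul, norm_mul, e_norm, one_mul, Complex.norm_real, Real.norm_of_nonneg (a_nonneg _ _)]
  have := hasSum_integral_of_summable_integral_norm
    (F := fun (n : ℕ) (t : ℝ) => (a δ n : ℂ) * (e (y - Real.log n) t * g t)) (μ := volume)
    (fun n => (e_int g _).const_mul _) (by
      simp only [hn, integral_const_mul]
      exact (a_summable hδ).mul_right _)
  have h2 := this.tsum_eq
  simp only [integral_const_mul, ← finv] at h2
  rw [h2]
  congr 1; ext t
  rw [LSeries, ← tsum_mul_left]
  congr 1; ext n
  rw [term_eq, sub_eq_add_neg, e_add]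
  ring

lemma inner_int {δ : ℝ} (hδ : 0 < δ) (t : ℝ) :
    ∫ u in Set.Ioi (0 : ℝ), (Real.exp (-δ * u) : ℂ) * e (-u) t = 1 / (δ + 2 * Real.pi * t * I) := by
  have h := integral_exp_mul_complex_Ioi (a := -(δ + 2 * Real.pi * t * I)) (by simpa using hδ) 0
  simp only [ofReal_zero, mul_zero, Complex.exp_zero] at h
  rw [neg_div_neg_eq] at h
  rw [← h]
  congr 1; ext u
  rw [e, Complex.ofReal_exp, ← Complex.exp_add]
  congr 1; push_cast; ring

lemma C2 (g : 𝓢(ℝ, ℂ)) {δ : ℝ} (hδ : 0 < δ) (y : ℝ) :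
    ∫ t : ℝ, e y t * g t * (1 / (δ + 2 * Real.pi * t * I)) =
      ∫ u in Set.Ioi (0 : ℝ), (Real.exp (-δ * u) : ℂ) * (𝓕⁻ g : 𝓢(ℝ, ℂ)) (y - u) := by
  simp only [finv, ← inner_int hδ, ← integral_const_mul]
  rw [integral_integral_swap]
  · congr 1; ext u; congr 1; ext t
    rw [sub_eq_add_neg, e_add]; ring
  · have h1 : Integrable (fun u : ℝ => (Real.exp (-δ * u) : ℂ)) (volume.restrict (Set.Ioi 0)) :=
      (exp_neg_integrableOn_Ioi 0 hδ).ofReal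
    have h2 := (g.integrable (μ := volume)).mul_prod h1
    have h3 : Continuous fun z : ℝ × ℝ => e y z.1 * e (-z.2) z.1 := by unfold e; fun_prop
    refine (h2.bdd_mul (c := 1) h3.aestronglyMeasurable
      (Eventually.of_forall fun z => by simp [e_norm])).congr (Eventually.of_forall fun z => ?_)
    simp only [Function.uncurry]
    ring

lemma Gline_cont {δ : ℝ} (hδ : 0 ≤ δ) : Continuous fun t : ℝ => G (1 + δ + 2 * Real.pi * t * I) :=
  G_cont.comp_continuous (by fun_prop) fun t => by simpa using hδ

lemma C3 (g : 𝓢(ℝ, ℂ)) (hg : HasCompactSupport g) {δ : ℝ} (hδ : 0 < δ) (y : ℝ) :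
    ∑' n : ℕ, (a δ n : ℂ) * (𝓕⁻ g : 𝓢(ℝ, ℂ)) (y - Real.log n) =
      (∫ t : ℝ, e y t * g t * G (1 + δ + 2 * Real.pi * t * I)) +
      ∫ u in Set.Ioi (0 : ℝ), (Real.exp (-δ * u) : ℂ) * (𝓕⁻ g : 𝓢(ℝ, ℂ)) (y - u) := by
  rw [C1 g hδ y, ← C2 g hδ y, ← integral_add]
  · congr 1; ext t
    rw [G_eq (by simpa using hδ), ← mul_add]
    congr 3
    ring
  · apply Continuous.integrable_of_hasCompactSupport
    · exact ((e_cont y).mul g.continuous).mul (Gline_cont hδ.le)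
    · exact (hg.mul_left).mul_right
  · apply Continuous.integrable_of_hasCompactSupport
    · refine ((e_cont y).mul g.continuous).mul (continuous_const.div (by fun_prop) fun t h => ?_)
      have := congrArg Complex.re h
      simp at this
      exact hδ.ne' this
    · exact (hg.mul_left).mul_right

lemma C4 (g : 𝓢(ℝ, ℂ)) (hg : HasCompactSupport g) (y : ℝ) :
    S (𝓕⁻ g) y = (∫ t : ℝ, e y t * g t * G (1 + 2 * Real.pi * t * I)) +
      ∫ u in Set.Ioi (0 : ℝ), (𝓕⁻ g : 𝓢(ℝ, ℂ)) (y - u) := by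
  set f : 𝓢(ℝ, ℂ) := 𝓕⁻ g
  have T1 : Tendsto (fun δ : ℝ => ∑' n : ℕ, (a δ n : ℂ) * f (y - Real.log n)) (𝓝[>] 0) (𝓝 (S f y)) := by
    apply tendsto_tsum_of_dominated_convergence (S_summable f y).norm
    · intro n
      rcases Nat.eq_zero_or_pos n with rfl | hn
      · simp [a, w]
      have hn0 : (n : ℝ) ≠ 0 := by exact_mod_cast hn.ne'
      have : ContinuousAt (fun δ : ℝ => ((a δ n : ℝ) : ℂ) * f (y - Real.log n)) 0 := by
        have : ContinuousAt (fun δ : ℝ => a δ n) 0 := by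
          unfold a
          exact continuousAt_const.mul
            ((Real.continuousAt_const_rpow hn0).comp continuousAt_neg)
        exact (Complex.continuous_ofReal.continuousAt.comp this).mul continuousAt_const
      have := this.tendsto.mono_left (nhdsWithin_le_nhds (s := Set.Ioi 0))
      simpa [a] using this
    · filter_upwards [self_mem_nhdsWithin] with δ hδ n
      rcases Nat.eq_zero_or_pos n with rfl | hn
      · simp [a, w]
      have hn0 : (1 : ℝ) ≤ n := by exact_mod_cast hn
      rw [norm_mul, norm_mul, Complex.norm_real, Complex.norm_real,
        Real.norm_of_nonneg (a_nonneg _ _), Real.norm_of_nonneg (w_nonneg _)]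
      gcongr
      exact mul_le_of_le_one_right (w_nonneg n)
        (Real.rpow_le_one_of_one_le_of_nonpos hn0 (by simpa using (Set.mem_Ioi.1 hδ).le))
  have T2 : Tendsto (fun δ : ℝ => ∫ t : ℝ, e y t * g t * G (1 + δ + 2 * Real.pi * t * I)) (𝓝[>] 0)
      (𝓝 (∫ t : ℝ, e y t * g t * G (1 + 2 * Real.pi * t * I))) := by
    have hK : IsCompact (Set.Icc (0 : ℝ) 1 ×ˢ tsupport g) := isCompact_Icc.prod hg
    have hc : ContinuousOn (fun z : ℝ × ℝ => G (1 + z.1 + 2 * Real.pi * z.2 * I))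
        (Set.Icc (0 : ℝ) 1 ×ˢ tsupport g) := by
      apply G_cont.comp (by fun_prop)
      rintro ⟨δ, t⟩ ⟨h, -⟩
      simpa using h.1
    obtain ⟨M, hM⟩ := hK.exists_bound_of_continuousOn hc
    apply tendsto_integral_filter_of_dominated_convergence (fun t => M * ‖g t‖)
    · filter_upwards [self_mem_nhdsWithin] with δ hδ
      exact (((e_cont y).mul g.continuous).mul (Gline_cont (Set.mem_Ioi.1 hδ).le)).aestronglyMeasurable
    · filter_upwards [Ioo_mem_nhdsGT (zero_lt_one' ℝ)] with δ hδ
      refine Eventually.of_forall fun t => ?_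
      by_cases ht : t ∈ tsupport g
      · have := hM (δ, t) ⟨⟨hδ.1.le, hδ.2.le⟩, ht⟩
        rw [norm_mul, norm_mul, e_norm, one_mul, mul_comm]
        gcongr
      · simp [image_eq_zero_of_notMem_tsupport ht]
    · exact g.integrable.norm.const_mul M
    · refine Eventually.of_forall fun t => ?_
      apply Tendsto.const_mul
      have h1 : ContinuousWithinAt G {s | 1 ≤ s.re} (1 + 2 * Real.pi * t * I) :=
        G_cont _ (by simp)
      apply h1.tendsto.comp
      apply tendsto_nhdsWithin_iff.2 ⟨?_, ?_⟩
      · have : Continuous fun δ : ℝ => (1 + δ + 2 * Real.pi * t * I : ℂ) := by fun_prop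
        have := (this.tendsto 0).mono_left (nhdsWithin_le_nhds (s := Set.Ioi 0))
        simpa using this
      · filter_upwards [self_mem_nhdsWithin] with δ hδ
        simpa using (Set.mem_Ioi.1 hδ).le
  have T3 : Tendsto (fun δ : ℝ => ∫ u in Set.Ioi (0 : ℝ), (Real.exp (-δ * u) : ℂ) * f (y - u)) (𝓝[>] 0)
      (𝓝 (∫ u in Set.Ioi (0 : ℝ), f (y - u))) := by
    have hfc : Continuous fun u : ℝ => f (y - u) := f.continuous.comp (by fun_prop)
    apply tendsto_integral_filter_of_dominated_convergence (fun u => ‖f (y - u)‖)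
    · refine Eventually.of_forall fun δ => Continuous.aestronglyMeasurable ?_
      exact (by fun_prop : Continuous fun u : ℝ => (Real.exp (-δ * u) : ℂ)).mul hfc
    · filter_upwards [self_mem_nhdsWithin] with δ hδ
      filter_upwards [ae_restrict_mem measurableSet_Ioi] with u hu
      rw [norm_mul, Complex.norm_real, Real.norm_of_nonneg (Real.exp_pos _).le]
      apply mul_le_of_le_one_left (norm_nonneg _)
      rw [Real.exp_le_one_iff]
      have := mul_pos (Set.mem_Ioi.1 hδ) (Set.mem_Ioi.1 hu)
      linarith
    · exact ((f.integrable (μ := volume)).comp_sub_left y).norm.integrableOn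
    · refine Eventually.of_forall fun u => ?_
      have : Continuous fun δ : ℝ => (Real.exp (-δ * u) : ℂ) * f (y - u) := by fun_prop
      have := (this.tendsto 0).mono_left (nhdsWithin_le_nhds (s := Set.Ioi 0))
      simpa using this
  refine tendsto_nhds_unique T1 ((T2.add T3).congr' ?_)
  filter_upwards [self_mem_nhdsWithin] with δ hδ
  exact (C3 g hg hδ y).symm

lemma C5 (g : 𝓢(ℝ, ℂ)) (hg : HasCompactSupport g) :
    Tendsto (S (𝓕⁻ g)) atTop (𝓝 (∫ v, (𝓕⁻ g : 𝓢(ℝ, ℂ)) v)) := by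
  set f : 𝓢(ℝ, ℂ) := 𝓕⁻ g
  have T1 : Tendsto (fun y : ℝ => ∫ t : ℝ, e y t * g t * G (1 + 2 * Real.pi * t * I)) atTop (𝓝 0) := by
    have := Real.tendsto_integral_exp_smul_cocompact (fun t => g t * G (1 + 2 * Real.pi * t * I))
    have h2 := (this.mono_left atBot_le_cocompact).comp tendsto_neg_atTop_atBot
    refine h2.congr fun y => ?_
    simp only [Function.comp]
    congr 1; ext t
    rw [Circle.smul_def, Real.fourierChar_apply, e, smul_eq_mul, mul_assoc (cexp _)]
    congr 2
    push_cast; ring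
  have T2 : Tendsto (fun y : ℝ => ∫ u in Set.Ioi (0 : ℝ), f (y - u)) atTop (𝓝 (∫ v, f v)) := by
    have h := (aecover_Iio (μ := volume) (tendsto_id (α := ℝ) (x := atTop))).integral_tendsto_of_countably_generated
      (f := f) f.integrable
    refine h.congr fun y => ?_
    rw [← integral_indicator measurableSet_Ioi, ← integral_indicator measurableSet_Iio,
      ← integral_sub_left_eq_self _ volume y]
    congr 1; ext u
    simp [Set.indicator]
  have := T1.add T2
  rw [zero_add] at this
  exact this.congr fun y => (C4 g hg y).symm

lemma E (f : 𝓢(ℝ, ℂ)) : Tendsto (S f) atTop (𝓝 (∫ v, f v)) := by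
  obtain ⟨C, hC0, hC⟩ := exists_S_bound
  obtain ⟨D, hD0, hD⟩ := exists_int_bound
  rw [Metric.tendsto_nhds]
  intro ε hε
  obtain ⟨g, hg, hgq⟩ := approx' f (ε := ε / (3 * (C + D + 1))) (by positivity)
  have h1 : (C + D + 1) * q (𝓕⁻ g - f) < ε / 3 := by
    rw [lt_div_iff₀ (by positivity)] at hgq
    linarith
  filter_upwards [(Metric.tendsto_nhds.1 (C5 g hg)) (ε / 3) (by positivity)] with y hy
  rw [dist_eq_norm] at hy ⊢
  have h2 := hC (𝓕⁻ g - f) y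
  have h3 := hD (𝓕⁻ g - f)
  rw [S_sub] at h2
  have e3 : ∫ v, (𝓕⁻ g - f : 𝓢(ℝ, ℂ)) v = (∫ v, (𝓕⁻ g : 𝓢(ℝ, ℂ)) v) - ∫ v, f v := by
    rw [← integral_sub (SchwartzMap.integrable _) f.integrable]
    rfl
  rw [e3] at h3
  have h4 := q_nonneg (𝓕⁻ g - f)
  have : S f y - ∫ v, f v = (S (𝓕⁻ g) y - ∫ v, (𝓕⁻ g : 𝓢(ℝ, ℂ)) v) - (S (𝓕⁻ g) y - S f y) +
      ((∫ v, (𝓕⁻ g : 𝓢(ℝ, ℂ)) v) - ∫ v, f v) := by ring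
  rw [this]
  refine (norm_add_le _ _).trans_lt ?_
  refine (add_le_add_left (norm_sub_le _ _) _).trans_lt ?_
  nlinarith

/-- the kernels -/
noncomputable def κ (m : ℕ) (v : ℝ) : ℂ :=
  ((Real.exp (-(m * v)) * Real.exp (-Real.pi * Real.exp (-(2 * v))) : ℝ) : ℂ)

lemma κ_contDiff (m : ℕ) : ContDiff ℝ ∞ (κ m) := by
  have h : ContDiff ℝ ∞ (fun v : ℝ => Real.exp (-(m * v)) * Real.exp (-Real.pi * Real.exp (-(2 * v)))) := by
    fun_prop
  exact Complex.ofRealCLM.contDiff.comp h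

lemma κ_deriv (m : ℕ) : deriv (κ m) = (-(m : ℂ)) • κ m + (2 * Real.pi : ℂ) • κ (m + 2) := by
  ext v
  have h1 : HasDerivAt (fun v : ℝ => Real.exp (-(m * v))) (Real.exp (-(m * v)) * (-(m * 1))) v :=
    (((hasDerivAt_id v).const_mul (m : ℝ)).neg).exp
  have h2 : HasDerivAt (fun v : ℝ => Real.exp (-(2 * v))) (Real.exp (-(2 * v)) * (-(2 * 1))) v :=
    (((hasDerivAt_id v).const_mul (2 : ℝ)).neg).exp
  have h := (h1.mul (h2.const_mul (-Real.pi)).exp).ofReal_comp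
  refine (h.deriv).trans ?_
  simp only [κ, Pi.add_apply, Pi.smul_apply, smul_eq_mul]
  have : Real.exp (-(((m + 2 : ℕ) : ℝ) * v)) = Real.exp (-(m * v)) * Real.exp (-(2 * v)) := by
    rw [← Real.exp_add]; congr 1; push_cast; ring
  rw [this]
  push_cast
  ring

lemma κ_bound (k m : ℕ) (hm : 1 ≤ m) (v : ℝ) : |v| ^ k * ‖κ m v‖ ≤ k.factorial * (m + 1).factorial := by
  rw [κ, Complex.norm_real, Real.norm_of_nonneg (by positivity)]
  have hk : (0 : ℝ) < k.factorial := by exact_mod_cast k.factorial_pos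
  have hm' : (1 : ℝ) ≤ (m + 1).factorial := by exact_mod_cast (m + 1).factorial_pos
  have h1 : |v| ^ k ≤ k.factorial * Real.exp |v| := by
    have := Real.pow_div_factorial_le_exp |v| (abs_nonneg v) k
    rwa [div_le_iff₀' hk] at this
  have hmr : (1 : ℝ) ≤ m := by exact_mod_cast hm
  rcases le_total 0 v with hv | hv
  · rw [abs_of_nonneg hv] at *
    calc _ ≤ (k.factorial * Real.exp v) * (Real.exp (-v) * 1) := by
          gcongr
          · nlinarith
          · rw [Real.exp_le_one_iff]
            have := mul_pos Real.pi_pos (Real.exp_pos (-(2 * v)))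
            linarith
      _ = k.factorial := by
          rw [mul_one, mul_assoc, ← Real.exp_add]; simp
      _ ≤ _ := le_mul_of_one_le_right hk.le hm'
  · rw [abs_of_nonpos hv] at *
    set X := Real.exp (-v) with hX
    have hX1 : 1 ≤ X := Real.one_le_exp (by linarith)
    have e1 : Real.exp (-(m * v)) = X ^ m := by
      rw [hX, ← Real.exp_nat_mul]; congr 1; ring
    have e2 : Real.exp (-(2 * v)) = X ^ 2 := by
      rw [hX, ← Real.exp_nat_mul]; congr 1; push_cast; ring
    rw [e1, e2]
    have h3 : Real.exp (-Real.pi * X ^ 2) ≤ (Real.exp X)⁻¹ := by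
      rw [← Real.exp_neg]
      apply Real.exp_le_exp.2
      have := Real.pi_gt_three
      nlinarith
    have h4 := Real.pow_div_factorial_le_exp X (by linarith) (m + 1)
    rw [div_le_iff₀' (by linarith)] at h4
    calc _ ≤ (k.factorial * X) * (X ^ m * (Real.exp X)⁻¹) := by gcongr
      _ = k.factorial * (X ^ (m + 1) * (Real.exp X)⁻¹) := by ring
      _ ≤ _ := by
          gcongr
          rw [← div_eq_mul_inv, div_le_iff₀ (Real.exp_pos _)]
          exact h4

lemma κ_decay (n : ℕ) : ∀ m k : ℕ, 1 ≤ m → ∃ C, ∀ v, |v| ^ k * ‖iteratedDeriv n (κ m) v‖ ≤ C := by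
  induction n with
  | zero =>
    intro m k hm
    exact ⟨_, fun v => by simpa using κ_bound k m hm v⟩
  | succ n ih =>
    intro m k hm
    obtain ⟨C1, h1⟩ := ih m k hm
    obtain ⟨C2, h2⟩ := ih (m + 2) k (by omega)
    refine ⟨m * C1 + 2 * Real.pi * C2, fun v => ?_⟩
    have hd : ∀ m, ContDiffAt ℝ n (κ m) v := fun m =>
      ((κ_contDiff m).of_le (by exact_mod_cast le_top)).contDiffAt
    rw [iteratedDeriv_succ', κ_deriv, iteratedDeriv_add (f := -(m : ℂ) • κ m) (g := (2 * Real.pi : ℂ) • κ (m + 2))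
        ((hd m).const_smul (-(m : ℂ))) ((hd (m + 2)).const_smul (2 * Real.pi : ℂ)),
      iteratedDeriv_const_smul (hd _), iteratedDeriv_const_smul (hd _)]
    calc _ ≤ |v| ^ k * (‖-(m : ℂ) • iteratedDeriv n (κ m) v‖ +
            ‖(2 * Real.pi : ℂ) • iteratedDeriv n (κ (m + 2)) v‖) := by
          gcongr; exact norm_add_le _ _
      _ = m * (|v| ^ k * ‖iteratedDeriv n (κ m) v‖) +
          2 * Real.pi * (|v| ^ k * ‖iteratedDeriv n (κ (m + 2)) v‖) := by
          rw [norm_smul, norm_smul]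
          simp [abs_of_pos Real.pi_pos]
          ring
      _ ≤ _ := by
          have := Real.pi_pos
          gcongr
          · exact h1 v
          · exact h2 v

/-- the Gaussian kernel in logarithmic coordinates -/
noncomputable def K : 𝓢(ℝ, ℂ) where
  toFun := κ 1
  smooth' := κ_contDiff 1
  decay' k n := by
    obtain ⟨C, hC⟩ := κ_decay n 1 k le_rfl
    refine ⟨C, fun v => ?_⟩
    rw [norm_iteratedFDeriv_eq_norm_iteratedDeriv]
    exact hC v

lemma K_apply (v : ℝ) : K v = ((Real.exp (-v) * Real.exp (-Real.pi * Real.exp (-v) ^ 2) : ℝ) : ℂ) := by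
  change κ 1 v = _
  rw [κ, ← Real.exp_nat_mul]
  norm_num

lemma K_int : ∫ v, K v = ((1 / 2 : ℝ) : ℂ) := by
  simp only [K_apply]
  rw [integral_complex_ofReal]
  congr 1
  have h1 := integral_image_eq_integral_abs_deriv_smul (s := Set.univ) (f := fun v : ℝ => Real.exp (-v))
    (f' := fun v => -Real.exp (-v)) MeasurableSet.univ
    (fun v _ => by
      have := ((hasDerivAt_id v).neg).exp
      simpa using! this)
    (fun x _ y _ h => by simpa using h) (fun u => Real.exp (-Real.pi * u ^ 2))
  have h2 : (fun v : ℝ => Real.exp (-v)) '' Set.univ = Set.Ioi 0 := by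
    ext u
    simp only [Set.image_univ, Set.mem_range, Set.mem_Ioi]
    refine ⟨?_, fun h => ⟨-Real.log u, by rw [neg_neg, Real.exp_log h]⟩⟩
    rintro ⟨v, rfl⟩
    positivity
  rw [h2, integral_gaussian_Ioi] at h1
  simp only [Measure.restrict_univ, abs_neg, abs_of_pos (Real.exp_pos _), smul_eq_mul] at h1
  rw [← h1, div_self Real.pi_ne_zero]
  simp

/-- weights at nonprimes -/
noncomputable def wc (n : ℕ) : ℝ := (if n.Prime then 0 else ArithmeticFunction.vonMangoldt n) / n

lemma wc_summable : Summable wc := by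
  have := ArithmeticFunction.vonMangoldt.summable_residueClass_non_primes_div (1 : ZMod 1)
  rw [residue_eq] at this
  exact this

lemma K_bdd (v : ℝ) : ‖K v‖ ≤ q K := (norm_le_q K v).trans
  (mul_le_of_le_one_right (q_nonneg K) (by
    rw [div_le_one (by positivity)]; nlinarith [sq_nonneg v]))

lemma wc_term (y : ℝ) (n : ℕ) : ‖(wc n : ℂ) * K (y - Real.log n)‖ ≤ ‖wc n‖ * q K := by
  rw [norm_mul, Complex.norm_real]
  exact mul_le_mul_of_nonneg_left (K_bdd _) (norm_nonneg _)

lemma wc_lim : Tendsto (fun y : ℝ => ∑' n : ℕ, (wc n : ℂ) * K (y - Real.log n)) atTop (𝓝 0) := by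
  have := tendsto_tsum_of_dominated_convergence
    (f := fun (y : ℝ) (n : ℕ) => (wc n : ℂ) * K (y - Real.log n)) (g := fun _ => 0)
    (wc_summable.norm.mul_right (q K)) (fun n => by
      have h1 : Tendsto (fun y : ℝ => y - Real.log n) atTop atTop :=
        tendsto_atTop_add_const_right _ _ tendsto_id
      have h2 : Tendsto (fun v => K v) (cocompact ℝ) (𝓝 0) := zero_at_infty K
      have := ((h2.mono_left atTop_le_cocompact).comp h1).const_mul (wc n : ℂ)
      simpa using! this) (Eventually.of_forall fun y n => wc_term y n)
  simpa using this

lemma prime_lim : Tendsto (fun y : ℝ => ∑' n : ℕ, ((w n - wc n : ℝ) : ℂ) * K (y - Real.log n)) atTop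
    (𝓝 ((1 / 2 : ℝ) : ℂ)) := by
  have := (E K).sub wc_lim
  rw [K_int, sub_zero] at this
  refine this.congr fun y => ?_
  have hs : Summable fun n : ℕ => (wc n : ℂ) * K (y - Real.log n) :=
    Summable.of_norm_bounded (wc_summable.norm.mul_right (q K)) (wc_term y)
  rw [S, ← (S_summable K y).tsum_sub hs]
  congr 1; ext n
  push_cast; ring

lemma prime_sum {x : ℝ} (hx : 0 < x) :
    ∑' n : ℕ, ((w n - wc n : ℝ) : ℂ) * K (-Real.log x / 2 - Real.log n) =
      ((Real.sqrt x * primePhi x : ℝ) : ℂ) := by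
  have h1 : ∀ n : ℕ, ((w n - wc n : ℝ) : ℂ) * K (-Real.log x / 2 - Real.log n) =
      ((Set.indicator {p : ℕ | p.Prime} (fun p : ℕ => Real.sqrt x * (Real.log p *
        Real.exp (-(p : ℝ) ^ 2 * Real.pi * x))) n : ℝ) : ℂ) := by
    intro n
    by_cases hn : n.Prime
    · rw [Set.indicator_of_mem (by exact hn)]
      have hn0 : (0 : ℝ) < n := by exact_mod_cast hn.pos
      have e1 : Real.exp (-(-Real.log x / 2 - Real.log n)) = Real.sqrt x * n := by
        rw [show -(-Real.log x / 2 - Real.log n) = Real.log x / 2 + Real.log n by ring, Real.exp_add,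
          Real.exp_log hn0, Real.sqrt_eq_rpow, Real.rpow_def_of_pos hx]
        congr 2; ring
      rw [K_apply, e1, w, wc, if_pos hn, ArithmeticFunction.vonMangoldt_apply_prime hn,
        ← Complex.ofReal_mul, mul_pow, Real.sq_sqrt hx.le,
        show -Real.pi * (x * (n : ℝ) ^ 2) = -(n : ℝ) ^ 2 * Real.pi * x by ring]
      congr 1
      field_simp
      ring
    · rw [Set.indicator_of_notMem (by exact hn), w, wc, if_neg hn]
      simp
  simp only [h1]
  rw [← Complex.ofReal_tsum, primePhi, ← tsum_mul_left]
  congr 1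
  exact (tsum_subtype {p : ℕ | p.Prime} (fun p : ℕ => Real.sqrt x * (Real.log p *
        Real.exp (-(p : ℝ) ^ 2 * Real.pi * x)))).symm

end PG

/-- lim_{x→0⁺} 2√x·∑_p (log p)·e^{−p²πx} = 1. -/
theorem stmt_13 :
    Tendsto (fun x : ℝ => 2 * Real.sqrt x * primePhi x) (𝓝[>] (0 : ℝ)) (𝓝 1) := by
  have h1 : Tendsto (fun x : ℝ => -Real.log x / 2) (𝓝[>] 0) atTop :=
    (tendsto_neg_atBot_atTop.comp Real.tendsto_log_nhdsGT_zero).atTop_div_const (by norm_num)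
  have h2 := (Complex.continuous_re.tendsto _).comp (PG.prime_lim.comp h1)
  have h3 := h2.const_mul 2
  simp only [Complex.ofReal_re] at h3
  rw [show (2 : ℝ) * (1 / 2) = 1 by norm_num] at h3
  refine h3.congr' ?_
  filter_upwards [self_mem_nhdsWithin] with x hx
  simp only [Function.comp, PG.prime_sum (Set.mem_Ioi.1 hx), Complex.ofReal_re]
  ring
end
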